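/- Under the hypotheses of the regime switching asymptotic theorem (|A| < ∞, underlying irreducible aperiodic Markov chain with stationary distribution π, P ∈ RV_α(C, ℓ) with α ∈ (0,1)), for all r ≥ 0: lim_{n→∞} P_η{𝓛_n = r} / E_η[ 1{L_n > r} L_n^{−(1−α)} ℓ(L_n) ] = ( Σ_{a∈A} π_a^α C(a) αΓ(r+1−α)/r! ) / ( Σ_{a∈A} π_a^α ). -/

import Mathlib

open MeasureTheory ENNReal Finset Filter

/-- `t`-step transition matrix of a kernel `Q` on a finite set. -/
noncomputable def mpow {A : Type*} [Fintype A] [DecidableEq A] (Q : A → A → ℝ) :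
    ℕ → A → A → ℝ
  | 0 => fun x y => if x = y then 1 else 0
  | (t + 1) => fun x y => ∑ z, Q x z * mpow Q t z y

/-- `ℓ` is slowly varying at `+∞`: `ℓ(cx)/ℓ(x) → 1` for every `c > 0`. -/
def SlowlyVarying (ℓ : ℝ → ℝ) : Prop :=
  ∀ c : ℝ, 0 < c → Tendsto (fun x => ℓ (c * x) / ℓ x) atTop (nhds 1)

open scoped Classical in
/-- The (real-valued) counting function `ν(a,ε) = Σ_k 1{p_{a,k} ≥ ε}`. -/
noncomputable def nuR {A : Type*} (p : A → ℕ → ℝ) (a : A) (ε : ℝ) : ℝ :=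
  ∑' k, if ε ≤ p a k then (1 : ℝ) else 0

noncomputable def EX {A : Type*} [Fintype A] [DecidableEq A] (Q : A → A → ℝ) (η : A → ℝ) (a : A) :
    ℕ → (ℕ → A → ℝ) → ℝ
  | 0, φ => ∑ x, η x * φ 0 x
  | (n + 1), φ => EX Q η a n (fun m x => ∑ y, Q x y * φ (m + if x = a then 1 else 0) y)

set_option linter.unusedSectionVars false
section EXsec
variable {A : Type*} [Fintype A] [DecidableEq A] {Q : A → A → ℝ} {η : A → ℝ} {a : A}

lemma EX_mono (hQnn : ∀ x y, 0 ≤ Q x y) (hηnn : ∀ a, 0 ≤ η a) (n : ℕ) :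
    ∀ {φ ψ : ℕ → A → ℝ}, (∀ m x, φ m x ≤ ψ m x) → EX Q η a n φ ≤ EX Q η a n ψ := by
  induction n with
  | zero =>
    intro φ ψ h
    exact Finset.sum_le_sum fun x _ => mul_le_mul_of_nonneg_left (h _ _) (hηnn x)
  | succ n ih =>
    intro φ ψ h
    exact ih fun m x => Finset.sum_le_sum fun y _ => mul_le_mul_of_nonneg_left (h _ _) (hQnn x y)

lemma EX_add (n : ℕ) : ∀ (φ ψ : ℕ → A → ℝ),
    EX Q η a n (fun m x => φ m x + ψ m x) = EX Q η a n φ + EX Q η a n ψ := by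
  induction n with
  | zero => intro φ ψ; simp [EX, mul_add, Finset.sum_add_distrib]
  | succ n ih =>
    intro φ ψ
    simp only [EX, mul_add, Finset.sum_add_distrib]
    exact ih _ _

lemma EX_smul (n : ℕ) : ∀ (c : ℝ) (φ : ℕ → A → ℝ),
    EX Q η a n (fun m x => c * φ m x) = c * EX Q η a n φ := by
  induction n with
  | zero => intro c φ; simp only [EX, Finset.mul_sum]; congr 1; ext; ring
  | succ n ih =>
    intro c φ
    simp only [EX]
    rw [← ih]
    congr 1; ext m x; rw [Finset.mul_sum]; congr 1; ext; ring

lemma EX_const (hQ : ∀ x, ∑ y, Q x y = 1) (hηsum : ∑ a, η a = 1) (n : ℕ) (c : ℝ) :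
    EX Q η a n (fun _ _ => c) = c := by
  induction n with
  | zero => simp [EX, ← Finset.sum_mul, hηsum]
  | succ n ih => simp only [EX, ← Finset.sum_mul, hQ, one_mul]; exact ih

lemma EX_nonneg (hQnn : ∀ x y, 0 ≤ Q x y) (hηnn : ∀ a, 0 ≤ η a) 
    (n : ℕ) {φ : ℕ → A → ℝ} (h : ∀ m x, 0 ≤ φ m x) : 0 ≤ EX Q η a n φ := by
  have h1 := EX_mono (a := a) hQnn hηnn n (φ := fun m x => 0 * φ m x) (ψ := φ)
    (fun m x => by simpa using h m x)
  rw [EX_smul, zero_mul] at h1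
  exact h1

lemma EX_hasSum {ι : Type*} (n : ℕ) : ∀ {φ : ι → ℕ → A → ℝ} {ψ : ℕ → A → ℝ},
    (∀ m x, HasSum (fun i => φ i m x) (ψ m x)) →
    HasSum (fun i => EX Q η a n (φ i)) (EX Q η a n ψ) := by
  induction n with
  | zero =>
    intro φ ψ h
    exact hasSum_sum fun x _ => (h 0 x).mul_left _
  | succ n ih =>
    intro φ ψ h
    exact ih fun m x => hasSum_sum fun y _ => (h _ y).mul_left _

noncomputable def Qop (Q : A → A → ℝ) (f : A → ℝ) : A → ℝ := fun x => ∑ y, Q x y * f y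

lemma EX_state (n : ℕ) : ∀ (f : A → ℝ),
    EX Q η a n (fun _ x => f x) = ∑ x, η x * ((Qop Q)^[n] f) x := by
  induction n with
  | zero => intro f; simp [EX]
  | succ n ih => intro f; simp only [EX]; exact ih (Qop Q f)

lemma Qop_iter (t : ℕ) (f : A → ℝ) (x : A) :
    ((Qop Q)^[t] f) x = ∑ z, mpow Q t x z * f z := by
  induction t generalizing x with
  | zero => simp [mpow]
  | succ t ih =>
    rw [Function.iterate_succ_apply']
    simp only [Qop, mpow, ih, Finset.mul_sum, Finset.sum_mul]
    rw [Finset.sum_comm]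
    congr 1; ext z; congr 1; ext w; ring

lemma mpow_sum (hQ : ∀ x, ∑ y, Q x y = 1) (t : ℕ) (x : A) : ∑ z, mpow Q t x z = 1 := by
  induction t generalizing x with
  | zero => simp [mpow]
  | succ t ih =>
    simp only [mpow]
    rw [Finset.sum_comm]
    simp [← Finset.mul_sum, ih, hQ]

/-- contraction of the oscillation by a stochastic matrix bounded below. -/
lemma osc_step [Nonempty A] (q : A → A → ℝ) (δ : ℝ) (hq : ∀ x y, δ ≤ q x y)
    (hq1 : ∀ x, ∑ y, q x y = 1) (f : A → ℝ) (B : ℝ) (hB : ∀ x y, f x - f y ≤ B) (x y : A) :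
    ∑ z, q x z * f z - ∑ z, q y z * f z ≤ (1 - Fintype.card A * δ) * B := by
  obtain ⟨u, hu⟩ := Finite.exists_max f
  obtain ⟨v, hv⟩ := Finite.exists_min f
  have h1 : ∑ z, (q x z - δ) * f z ≤ ∑ z, (q x z - δ) * f u :=
    Finset.sum_le_sum fun z _ => mul_le_mul_of_nonneg_left (hu z) (sub_nonneg.2 (hq _ _))
  have h2 : ∑ z, (q y z - δ) * f v ≤ ∑ z, (q y z - δ) * f z :=
    Finset.sum_le_sum fun z _ => mul_le_mul_of_nonneg_left (hv z) (sub_nonneg.2 (hq _ _))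
  have e : ∀ x, ∑ z, (q x z - δ) = 1 - Fintype.card A * δ := by
    intro x; simp [Finset.sum_sub_distrib, hq1]
  have h0 : 0 ≤ 1 - Fintype.card A * δ := by
    rw [← e x]; exact Finset.sum_nonneg fun z _ => sub_nonneg.2 (hq _ _)
  rw [← Finset.sum_mul, e] at h1 h2
  simp only [sub_mul, Finset.sum_sub_distrib] at h1 h2
  have := mul_le_mul_of_nonneg_left (hB u v) h0
  linarith

lemma mpow_pos_succ (hQnn : ∀ x y, 0 ≤ Q x y) (hQ : ∀ x, ∑ y, Q x y = 1) (t : ℕ)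
    (h : ∀ a b, 0 < mpow Q t a b) : ∀ a b, 0 < mpow Q (t + 1) a b := by
  intro a b
  simp only [mpow]
  have : ∃ z ∈ Finset.univ, 0 < Q a z := by
    by_contra hc
    push Not at hc
    have : ∑ y, Q a y ≤ 0 := Finset.sum_nonpos fun y hy => hc y hy
    rw [hQ] at this; linarith
  obtain ⟨z, hz, hz'⟩ := this
  exact Finset.sum_pos' (fun i _ => mul_nonneg (hQnn _ _) (h _ _).le) ⟨z, hz, mul_pos hz' (h _ _)⟩

lemma exists_contraction [Nonempty A] (hQnn : ∀ x y, 0 ≤ Q x y) (hQ : ∀ x, ∑ y, Q x y = 1)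
    (hprim : ∃ t : ℕ, ∀ a b, 0 < mpow Q t a b) :
    ∃ t : ℕ, 0 < t ∧ ∃ ρ : ℝ, 0 ≤ ρ ∧ ρ < 1 ∧ ∀ (f : A → ℝ) (B : ℝ), (∀ x y, f x - f y ≤ B) →
      ∀ x y, ((Qop Q)^[t] f) x - ((Qop Q)^[t] f) y ≤ ρ * B := by
  obtain ⟨t, ht⟩ := hprim
  have ht' := mpow_pos_succ hQnn hQ t ht
  obtain ⟨u, hu⟩ := Finite.exists_min (fun z : A × A => mpow Q (t + 1) z.1 z.2)
  set δ := mpow Q (t + 1) u.1 u.2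
  have hδ : 0 < δ := ht' _ _
  have hc : (0 : ℝ) < Fintype.card A := by exact_mod_cast Fintype.card_pos
  refine ⟨t + 1, by omega, 1 - Fintype.card A * δ, ?_, ?_, ?_⟩
  · have := mpow_sum hQ (t + 1) u.1
    rw [sub_nonneg, ← this, ← nsmul_eq_mul, ← Finset.card_univ]
    exact Finset.card_nsmul_le_sum _ _ _ fun z _ => hu (u.1, z)
  · nlinarith
  · intro f B hB x y
    rw [Qop_iter, Qop_iter]
    exact osc_step _ δ (fun x y => hu (x, y)) (mpow_sum hQ _) f B hB x y

lemma Qop_osc [Nonempty A] (hQnn : ∀ x y, 0 ≤ Q x y) (hQ : ∀ x, ∑ y, Q x y = 1) (f : A → ℝ) (B : ℝ)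
    (hB : ∀ x y, f x - f y ≤ B) (x y : A) : Qop Q f x - Qop Q f y ≤ B := by
  have := osc_step Q 0 hQnn hQ f B hB x y
  simpa [Qop] using this

lemma pi_Qop {π : A → ℝ} (hstat : ∀ x, ∑ y, π y * Q y x = π x) (f : A → ℝ) :
    ∑ x, π x * Qop Q f x = ∑ x, π x * f x := by
  simp only [Qop, Finset.mul_sum]
  rw [Finset.sum_comm]
  congr 1; ext x
  rw [← hstat x, Finset.sum_mul]
  congr 1; ext y; ring

lemma abs_le_osc {π : A → ℝ} (hπpos : ∀ x, 0 < π x) (hπsum : ∑ x, π x = 1) (f : A → ℝ)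
    (h0 : ∑ x, π x * f x = 0) (B : ℝ) (hB : ∀ x y, f x - f y ≤ B) (x : A) : |f x| ≤ B := by
  have h1 : ∑ y, π y * (f x - f y) ≤ ∑ y, π y * B :=
    Finset.sum_le_sum fun y _ => mul_le_mul_of_nonneg_left (hB _ _) (hπpos y).le
  have h2 : ∑ y, π y * (f y - f x) ≤ ∑ y, π y * B :=
    Finset.sum_le_sum fun y _ => mul_le_mul_of_nonneg_left (hB _ _) (hπpos y).le
  simp only [mul_sub, Finset.sum_sub_distrib, h0, ← Finset.sum_mul, hπsum] at h1 h2
  rw [abs_le]; constructor <;> linarith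

lemma iter_tendsto [Nonempty A] (hQnn : ∀ x y, 0 ≤ Q x y) (hQ : ∀ x, ∑ y, Q x y = 1)
    (hprim : ∃ t : ℕ, ∀ a b, 0 < mpow Q t a b)
    {π : A → ℝ} (hπpos : ∀ x, 0 < π x) (hπsum : ∑ x, π x = 1)
    (hstat : ∀ x, ∑ y, π y * Q y x = π x) (f : A → ℝ) (h0 : ∑ x, π x * f x = 0) (x : A) :
    Tendsto (fun n => ((Qop Q)^[n] f) x) atTop (nhds 0) := by
  obtain ⟨t, ht, ρ, hρ0, hρ1, hc⟩ := exists_contraction hQnn hQ hprim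
  obtain ⟨B, hB⟩ : ∃ B, ∀ x y, f x - f y ≤ B := by
    obtain ⟨u, hu⟩ := Finite.exists_max (fun z : A × A => f z.1 - f z.2)
    exact ⟨_, fun x y => hu (x, y)⟩
  have key : ∀ j x y, ((Qop Q)^[t * j] f) x - ((Qop Q)^[t * j] f) y ≤ ρ ^ j * B := by
    intro j
    induction j with
    | zero => simpa using hB
    | succ j ih =>
      intro x y
      rw [mul_add, mul_one, add_comm, Function.iterate_add_apply, pow_succ', mul_assoc]
      exact hc _ _ ih x y
  have key2 : ∀ (g : A → ℝ) (B : ℝ), (∀ x y, g x - g y ≤ B) → ∀ i x y,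
      ((Qop Q)^[i] g) x - ((Qop Q)^[i] g) y ≤ B := by
    intro g B hg i
    induction i with
    | zero => simpa using hg
    | succ i ih =>
      intro x y
      rw [Function.iterate_succ_apply']
      exact Qop_osc hQnn hQ _ _ ih x y
  have key3 : ∀ n, ∑ x, π x * ((Qop Q)^[n] f) x = 0 := by
    intro n
    induction n with
    | zero => simpa using h0
    | succ n ih => rw [Function.iterate_succ_apply', pi_Qop hstat, ih]
  have key4 : ∀ n, |((Qop Q)^[n] f) x| ≤ ρ ^ (n / t) * B := by
    intro n
    refine abs_le_osc hπpos hπsum _ (key3 n) _ ?_ x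
    have e : n = n % t + t * (n / t) := (Nat.mod_add_div n t).symm
    intro x y
    conv_lhs => rw [e, Function.iterate_add_apply]
    exact key2 _ _ (key _) _ x y
  refine squeeze_zero_norm key4 ?_
  have h1 : Tendsto (fun n : ℕ => n / t) atTop atTop := Nat.tendsto_div_const_atTop ht.ne'
  have := ((tendsto_pow_atTop_nhds_zero_of_lt_one hρ0 hρ1).comp h1).mul_const B
  simpa using this

lemma EX_prob_tendsto [Nonempty A] (hQnn : ∀ x y, 0 ≤ Q x y) (hQ : ∀ x, ∑ y, Q x y = 1)
    (hprim : ∃ t : ℕ, ∀ a b, 0 < mpow Q t a b)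
    {π : A → ℝ} (hπpos : ∀ x, 0 < π x) (hπsum : ∑ x, π x = 1)
    (hstat : ∀ x, ∑ y, π y * Q y x = π x) (hηsum : ∑ a, η a = 1) :
    Tendsto (fun n => EX Q η a n (fun _ x => if x = a then 1 else 0)) atTop (nhds (π a)) := by
  have h1 : ∀ n, EX Q η a n (fun _ x => if x = a then 1 else 0)
      = π a + ∑ x, η x * ((Qop Q)^[n] (fun x => (if x = a then 1 else 0) - π a)) x := by
    intro n
    rw [← EX_state (a := a)]
    have h3 := EX_add (Q := Q) (η := η) (a := a) n (fun _ _ => π a)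
      (fun _ x => (if x = a then 1 else 0) - π a)
    rw [EX_const hQ hηsum n (π a)] at h3
    rw [← h3]
    congr 1; ext m x; ring
  simp_rw [h1]
  have h2 : Tendsto (fun n => ∑ x, η x * ((Qop Q)^[n] (fun x => (if x = a then 1 else 0) - π a)) x)
      atTop (nhds (∑ x, η x * 0)) := by
    refine tendsto_finsetSum _ fun x _ => Tendsto.const_mul _ ?_
    refine iter_tendsto hQnn hQ hprim hπpos hπsum hstat _ ?_ x
    simp [mul_sub, Finset.sum_sub_distrib, ← Finset.sum_mul, hπsum]
  simpa using h2.const_add (π a)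

lemma poisson [Nonempty A] (hQnn : ∀ x y, 0 ≤ Q x y) (hQ : ∀ x, ∑ y, Q x y = 1)
    (hprim : ∃ t : ℕ, ∀ a b, 0 < mpow Q t a b)
    {π : A → ℝ} (hπpos : ∀ x, 0 < π x) (hπsum : ∑ x, π x = 1)
    (hstat : ∀ x, ∑ y, π y * Q y x = π x) (f : A → ℝ) (h0 : ∑ x, π x * f x = 0) :
    ∃ h : A → ℝ, ∀ x, h x - Qop Q h x = f x := by
  let S : (A → ℝ) →ₗ[ℝ] (A → ℝ) :=
    { toFun := fun h x => h x - Qop Q h x + ∑ z, π z * h z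
      map_add' := by
        intro g h; ext x
        simp only [Qop, Pi.add_apply, mul_add, Finset.sum_add_distrib]; ring
      map_smul' := by
        intro c h; ext x
        simp only [Qop, Pi.smul_apply, smul_eq_mul, RingHom.id_apply, mul_add, mul_sub,
          Finset.mul_sum]
        congr 1
        · congr 1; congr 1; ext; ring
        · congr 1; ext; ring }
  have hS : ∀ h x, S h x = h x - Qop Q h x + ∑ z, π z * h z := fun _ _ => rfl
  have hπS : ∀ h, ∑ x, π x * S h x = ∑ z, π z * h z := by
    intro h
    simp only [hS, mul_add, mul_sub, Finset.sum_add_distrib, Finset.sum_sub_distrib, pi_Qop hstat,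
      ← Finset.sum_mul, hπsum]
    ring
  have hinj : Function.Injective S := by
    rw [injective_iff_map_eq_zero]
    intro h hh
    have e1 : ∑ z, π z * h z = 0 := by rw [← hπS, hh]; simp
    have e2 : Qop Q h = h := by
      ext x
      have := congrFun hh x
      rw [hS, e1] at this
      simp at this; linarith
    ext x
    have e3 : ∀ n, ((Qop Q)^[n] h) = h := fun n => Function.iterate_fixed e2 n
    have := iter_tendsto hQnn hQ hprim hπpos hπsum hstat h e1 x
    simp only [e3] at this
    exact tendsto_nhds_unique tendsto_const_nhds this
  obtain ⟨h, hh⟩ := (LinearMap.injective_iff_surjective.1 hinj) f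
  refine ⟨h, fun x => ?_⟩
  have e1 : ∑ z, π z * h z = 0 := by rw [← hπS, hh, h0]
  have := congrFun hh x
  rw [hS, e1] at this
  linarith

lemma EX_var [Nonempty A] (hQnn : ∀ x y, 0 ≤ Q x y) (hQ : ∀ x, ∑ y, Q x y = 1)
    (hprim : ∃ t : ℕ, ∀ a b, 0 < mpow Q t a b)
    {π : A → ℝ} (hπpos : ∀ x, 0 < π x) (hπsum : ∑ x, π x = 1)
    (hstat : ∀ x, ∑ y, π y * Q y x = π x) (hηnn : ∀ a, 0 ≤ η a) (hηsum : ∑ a, η a = 1) (a : A) :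
    ∃ K : ℝ, 0 ≤ K ∧ ∀ n : ℕ, EX Q η a n (fun m _ => ((m : ℝ) - π a * n) ^ 2) ≤ K * (n + 1) := by
  obtain ⟨h, hh⟩ := poisson hQnn hQ hprim hπpos hπsum hstat (fun x => (if x = a then 1 else 0) - π a)
    (by simp [mul_sub, Finset.sum_sub_distrib, ← Finset.sum_mul, hπsum])
  obtain ⟨u, hu⟩ := Finite.exists_max (fun x => |h x|)
  set H := |h u|
  have hH0 : 0 ≤ H := abs_nonneg _
  have hQH : ∀ x, |Qop Q h x| ≤ H := by
    intro x
    refine (Finset.abs_sum_le_sum_abs _ _).trans ?_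
    calc ∑ y, |Q x y * h y| ≤ ∑ y, Q x y * H := Finset.sum_le_sum fun y _ => by
          rw [abs_mul, abs_of_nonneg (hQnn x y)]
          exact mul_le_mul_of_nonneg_left (hu y) (hQnn x y)
      _ = H := by rw [← Finset.sum_mul, hQ, one_mul]
  have key : ∀ n : ℕ, EX Q η a n (fun m x => ((m : ℝ) - π a * n + h x) ^ 2) ≤ H ^ 2 + n * (4 * H ^ 2) := by
    intro n
    induction n with
    | zero =>
      have : EX Q η a 0 (fun m x => ((m : ℝ) - π a * (0 : ℕ) + h x) ^ 2) = EX Q η a 0 (fun m x => (h x) ^ 2) := by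
        simp [EX]
      rw [this]
      refine (EX_mono hQnn hηnn 0 (ψ := fun _ _ => H ^ 2) ?_).trans ?_
      · intro m x; exact sq_le_sq' (abs_le.1 (hu x)).1 (abs_le.1 (hu x)).2
      · rw [EX_const hQ hηsum]; simp
    | succ n ih =>
      simp only [EX]
      refine (EX_mono hQnn hηnn n (ψ := fun m x => ((m : ℝ) - π a * n + h x) ^ 2 + 4 * H ^ 2) ?_).trans ?_
      · intro m x
        have e : ∀ y, ((m + if x = a then 1 else 0 : ℕ) : ℝ) - π a * ((n + 1 : ℕ) : ℝ) + h y
            = ((m : ℝ) - π a * n + h x) + (h y - Qop Q h x) := by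
          intro y
          have := hh x
          push_cast
          linarith
        simp only [e]
        set c := ((m : ℝ) - π a * n + h x)
        have e2 : ∀ y, Q x y * (c + (h y - Qop Q h x)) ^ 2 = Q x y * c ^ 2 + 2 * c * (Q x y * h y)
            - 2 * c * Qop Q h x * Q x y + Q x y * (h y - Qop Q h x) ^ 2 := by intro y; ring
        simp only [e2, Finset.sum_add_distrib, Finset.sum_sub_distrib, ← Finset.sum_mul,
          ← Finset.mul_sum, hQ]
        have e3 : ∑ y, Q x y * h y = Qop Q h x := rfl
        have e4 : ∑ y, Q x y * (h y - Qop Q h x) ^ 2 ≤ ∑ y, Q x y * (4 * H ^ 2) := by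
          refine Finset.sum_le_sum fun y _ => mul_le_mul_of_nonneg_left ?_ (hQnn x y)
          have h1 := abs_le.1 (hu y)
          have h2 := abs_le.1 (hQH x)
          have : (4 * H ^ 2) = (2 * H) ^ 2 := by ring
          rw [this]
          apply sq_le_sq' <;> linarith [h1.1, h1.2, h2.1, h2.2]
        rw [← Finset.sum_mul, hQ] at e4
        rw [e3]; linarith
      · rw [EX_add, EX_const hQ hηsum]; push_cast; linarith
  refine ⟨8 * H ^ 2, by positivity, fun n => ?_⟩
  refine (EX_mono hQnn hηnn n (ψ := fun m x => 2 * ((m : ℝ) - π a * n + h x) ^ 2 + 2 * H ^ 2) ?_).trans ?_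
  · intro m x
    have : (h x) ^ 2 ≤ H ^ 2 := sq_le_sq' (abs_le.1 (hu x)).1 (abs_le.1 (hu x)).2
    nlinarith [sq_nonneg ((m : ℝ) - π a * n + 2 * h x)]
  · rw [EX_add, EX_const hQ hηsum, EX_smul]
    nlinarith [key n, sq_nonneg H, mul_nonneg (sq_nonneg H) (Nat.cast_nonneg (α := ℝ) n)]
end EXsec

noncomputable def pathW {A : Type*} (Q : A → A → ℝ) (η : A → ℝ) (p : A → ℕ → ℝ) (n : ℕ)
    (z : Fin (n + 1) → A × ℕ) : ℝ≥0∞ :=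
  (ENNReal.ofReal (η (z 0).1) * ENNReal.ofReal (p (z 0).1 (z 0).2)) *
    ∏ i : Fin n, (ENNReal.ofReal (Q (z i.castSucc).1 (z i.succ).1) *
      ENNReal.ofReal (p (z i.succ).1 (z i.succ).2))

set_option linter.unusedSectionVars false
section bridge
variable {A : Type*} [Fintype A] [DecidableEq A] {Q : A → A → ℝ} {η : A → ℝ} {p : A → ℕ → ℝ}

lemma pathW_snoc (n : ℕ) (z : Fin (n + 1) → A × ℕ) (s : A × ℕ) :
    pathW Q η p (n + 1) (Fin.snoc z s) =
      pathW Q η p n z * (ENNReal.ofReal (Q (z (Fin.last n)).1 s.1) * ENNReal.ofReal (p s.1 s.2)) := by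
  unfold pathW
  rw [Fin.prod_univ_castSucc]
  have h0 : (Fin.snoc z s : Fin (n + 2) → A × ℕ) 0 = z 0 := by
    exact Fin.snoc_castSucc (α := fun _ => A × ℕ) s z 0
  have h1 : ∀ i : Fin (n + 1), (Fin.snoc z s : Fin (n + 2) → A × ℕ) i.castSucc = z i := by
    intro i; exact Fin.snoc_castSucc (α := fun _ => A × ℕ) s z i
  have h2 : (Fin.snoc z s : Fin (n + 2) → A × ℕ) (Fin.last n).succ = s := by
    rw [Fin.succ_last]; exact Fin.snoc_last (α := fun _ => A × ℕ) s z
  simp only [h0, h1, h2, Fin.succ_castSucc]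
  ring

lemma tsum_snoc (n : ℕ) (F : (Fin (n + 2) → A × ℕ) → ℝ≥0∞) :
    ∑' z, F z = ∑' z : Fin (n + 1) → A × ℕ, ∑' s : A × ℕ, F (Fin.snoc z s) := by
  rw [← (Fin.snocEquiv (fun _ : Fin (n + 2) => A × ℕ)).tsum_eq F, ENNReal.tsum_prod',
    ENNReal.tsum_comm]
  rfl

lemma tsum_p (hpnn : ∀ a k, 0 ≤ p a k) (hp : ∀ a, HasSum (p a) 1) (a : A) :
    ∑' k, ENNReal.ofReal (p a k) = 1 := by
  rw [← ENNReal.ofReal_tsum_of_nonneg (hpnn a) (hp a).summable, (hp a).tsum_eq, ENNReal.ofReal_one]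

lemma sum_ofReal_one (f : A → ℝ) (hf : ∀ x, 0 ≤ f x) (h : ∑ x, f x = 1) :
    ∑ x, ENNReal.ofReal (f x) = 1 := by
  rw [← ENNReal.ofReal_sum_of_nonneg fun x _ => hf x, h, ENNReal.ofReal_one]

lemma tsum_path_zero (F : (Fin 1 → A × ℕ) → ℝ≥0∞) : ∑' z, F z = ∑' s : A × ℕ, F (fun _ => s) := by
  rw [← (Equiv.funUnique (Fin 1) (A × ℕ)).symm.tsum_eq F]
  rfl

lemma tsum_pair (F : A × ℕ → ℝ≥0∞) : ∑' s, F s = ∑ x, ∑' k, F (x, k) := by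
  rw [ENNReal.tsum_prod', tsum_fintype]

/-- occupation count -/
def Ncnt (a : A) (n : ℕ) (z : Fin (n + 1) → A × ℕ) : ℕ :=
  ∑ i : Fin n, if (z i.castSucc).1 = a then 1 else 0

def Mcnt (t : A × ℕ) (n : ℕ) (z : Fin (n + 1) → A × ℕ) : ℕ :=
  ∑ i : Fin n, if z i.castSucc = t then 1 else 0

lemma Ncnt_snoc (a : A) (n : ℕ) (z : Fin (n + 1) → A × ℕ) (s : A × ℕ) :
    Ncnt a (n + 1) (Fin.snoc z s) = Ncnt a n z + if (z (Fin.last n)).1 = a then 1 else 0 := by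
  have h1 : ∀ i : Fin (n + 1), (Fin.snoc z s : Fin (n + 2) → A × ℕ) i.castSucc = z i := by
    intro i; exact Fin.snoc_castSucc (α := fun _ => A × ℕ) s z i
  simp only [Ncnt, h1]
  rw [Fin.sum_univ_castSucc]

lemma Mcnt_snoc (t : A × ℕ) (n : ℕ) (z : Fin (n + 1) → A × ℕ) (s : A × ℕ) :
    Mcnt t (n + 1) (Fin.snoc z s) = Mcnt t n z + if z (Fin.last n) = t then 1 else 0 := by
  have h1 : ∀ i : Fin (n + 1), (Fin.snoc z s : Fin (n + 2) → A × ℕ) i.castSucc = z i := by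
    intro i; exact Fin.snoc_castSucc (α := fun _ => A × ℕ) s z i
  simp only [Mcnt, h1]
  rw [Fin.sum_univ_castSucc]

noncomputable def JJ (Q : A → A → ℝ) (η : A → ℝ) (p : A → ℕ → ℝ) (t : A × ℕ) (n : ℕ)
    (Φ : ℕ → ℕ → A × ℕ → ℝ≥0∞) : ℝ≥0∞ :=
  ∑' z, pathW Q η p n z * Φ (Ncnt t.1 n z) (Mcnt t n z) (z (Fin.last n))

lemma JJ_zero (t : A × ℕ) (Φ : ℕ → ℕ → A × ℕ → ℝ≥0∞) :
    JJ Q η p t 0 Φ = ∑ x, ENNReal.ofReal (η x) * ∑' k, ENNReal.ofReal (p x k) * Φ 0 0 (x, k) := by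
  unfold JJ
  rw [tsum_path_zero, tsum_pair]
  simp only [pathW, Ncnt, Mcnt, Finset.univ_eq_empty, Finset.prod_empty, Finset.sum_empty, mul_one]
  congr 1; ext x
  rw [← ENNReal.tsum_mul_left]
  congr 1; ext k; ring

lemma JJ_succ (t : A × ℕ) (n : ℕ) (Φ : ℕ → ℕ → A × ℕ → ℝ≥0∞) :
    JJ Q η p t (n + 1) Φ = JJ Q η p t n (fun m j s => ∑ y, ENNReal.ofReal (Q s.1 y) *
      ∑' k, ENNReal.ofReal (p y k) *
        Φ (m + if s.1 = t.1 then 1 else 0) (j + if s = t then 1 else 0) (y, k)) := by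
  unfold JJ
  rw [tsum_snoc]
  congr 1; ext z
  rw [tsum_pair, Finset.mul_sum]
  congr 1; ext y
  rw [← ENNReal.tsum_mul_left, ← ENNReal.tsum_mul_left]
  congr 1; ext k
  rw [pathW_snoc, Ncnt_snoc, Mcnt_snoc]
  have : (Fin.snoc z (y, k) : Fin (n + 2) → A × ℕ) (Fin.last (n + 1)) = (y, k) :=
    Fin.snoc_last (α := fun _ => A × ℕ) (y, k) z
  rw [this]
  ring

lemma JJ_resample (hpnn : ∀ a k, 0 ≤ p a k) (hp : ∀ a, HasSum (p a) 1) (t : A × ℕ) (n : ℕ)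
    (Φ : ℕ → ℕ → A × ℕ → ℝ≥0∞) :
    JJ Q η p t n Φ =
      JJ Q η p t n (fun m j s => ∑' k, ENNReal.ofReal (p s.1 k) * Φ m j (s.1, k)) := by
  cases n with
  | zero =>
    rw [JJ_zero, JJ_zero]
    simp only [ENNReal.tsum_mul_right, tsum_p hpnn hp, one_mul]
  | succ n =>
    rw [JJ_succ, JJ_succ]
    simp only [ENNReal.tsum_mul_right, tsum_p hpnn hp, one_mul]

lemma JJ_add (t : A × ℕ) (n : ℕ) (Φ Ψ : ℕ → ℕ → A × ℕ → ℝ≥0∞) :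
    JJ Q η p t n (fun m j s => Φ m j s + Ψ m j s) = JJ Q η p t n Φ + JJ Q η p t n Ψ := by
  unfold JJ
  rw [← ENNReal.tsum_add]
  congr 1; ext z; ring

noncomputable def EXe (Q : A → A → ℝ) (η : A → ℝ) (a : A) : ℕ → (ℕ → A → ℝ≥0∞) → ℝ≥0∞
  | 0, φ => ∑ x, ENNReal.ofReal (η x) * φ 0 x
  | (n + 1), φ => EXe Q η a n
      (fun m x => ∑ y, ENNReal.ofReal (Q x y) * φ (m + if x = a then 1 else 0) y)

lemma EXe_ofReal (hQnn : ∀ x y, 0 ≤ Q x y) (hηnn : ∀ a, 0 ≤ η a) (a : A) (n : ℕ) :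
    ∀ (φ : ℕ → A → ℝ), (∀ m x, 0 ≤ φ m x) →
      EXe Q η a n (fun m x => ENNReal.ofReal (φ m x)) = ENNReal.ofReal (EX Q η a n φ) := by
  induction n with
  | zero =>
    intro φ h
    simp only [EXe, EX]
    rw [ENNReal.ofReal_sum_of_nonneg fun x _ => mul_nonneg (hηnn x) (h _ _)]
    congr 1; ext x; rw [ENNReal.ofReal_mul (hηnn x)]
  | succ n ih =>
    intro φ h
    simp only [EXe, EX]
    rw [← ih _ fun m x => Finset.sum_nonneg fun y _ => mul_nonneg (hQnn x y) (h _ _)]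
    congr 1; ext m x
    rw [ENNReal.ofReal_sum_of_nonneg fun y _ => mul_nonneg (hQnn x y) (h _ _)]
    congr 1; ext y; rw [ENNReal.ofReal_mul (hQnn x y)]

lemma EXe_add (a : A) (n : ℕ) : ∀ (φ ψ : ℕ → A → ℝ≥0∞),
    EXe Q η a n (fun m x => φ m x + ψ m x) = EXe Q η a n φ + EXe Q η a n ψ := by
  induction n with
  | zero => intro φ ψ; simp [EXe, mul_add, Finset.sum_add_distrib]
  | succ n ih =>
    intro φ ψ
    simp only [EXe, mul_add, Finset.sum_add_distrib]
    exact ih _ _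

lemma JJ_state (hpnn : ∀ a k, 0 ≤ p a k) (hp : ∀ a, HasSum (p a) 1) (t : A × ℕ) (n : ℕ) :
    ∀ φ : ℕ → A → ℝ≥0∞, JJ Q η p t n (fun m _ s => φ m s.1) = EXe Q η t.1 n φ := by
  induction n with
  | zero =>
    intro φ
    rw [JJ_zero]
    simp only [ENNReal.tsum_mul_right, tsum_p hpnn hp, one_mul, EXe]
  | succ n ih =>
    intro φ
    rw [JJ_succ]
    simp only [ENNReal.tsum_mul_right, tsum_p hpnn hp, one_mul, EXe]
    exact ih (fun m x => ∑ y, ENNReal.ofReal (Q x y) * φ (m + if x = t.1 then 1 else 0) y)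

/-- binomial weights -/
noncomputable def binW (q : ℝ) (m r : ℕ) : ℝ := (m.choose r : ℝ) * q ^ r * (1 - q) ^ (m - r)

lemma binW_nonneg {q : ℝ} (h0 : 0 ≤ q) (h1 : q ≤ 1) (m r : ℕ) : 0 ≤ binW q m r := by
  unfold binW
  have : 0 ≤ 1 - q := by linarith
  positivity

lemma binW_succ_zero (q : ℝ) (m : ℕ) : binW q (m + 1) 0 = (1 - q) * binW q m 0 := by
  simp [binW, pow_succ]; ring

lemma binW_succ_succ (q : ℝ) (m r : ℕ) :
    binW q (m + 1) (r + 1) = (1 - q) * binW q m (r + 1) + q * binW q m r := by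
  unfold binW
  rw [Nat.choose_succ_succ, Nat.add_sub_add_right]
  rcases Nat.lt_or_ge m (r + 1) with h | h
  · rw [Nat.choose_eq_zero_of_lt h]; push_cast; ring
  · have : m - r = m - (r + 1) + 1 := by omega
    rw [this]; push_cast; ring

lemma JJ_bin (hpnn : ∀ a k, 0 ≤ p a k) (hp : ∀ a, HasSum (p a) 1) (t : A × ℕ) (n : ℕ) :
    ∀ (r : ℕ) (φ : ℕ → A → ℝ≥0∞), JJ Q η p t n (fun m j s => (if j = r then 1 else 0) * φ m s.1) =
      EXe Q η t.1 n (fun m x => ENNReal.ofReal (binW (p t.1 t.2) m r) * φ m x) := by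
  have hq0 : 0 ≤ p t.1 t.2 := hpnn _ _
  have hq1 : p t.1 t.2 ≤ 1 := le_hasSum (hp t.1) t.2 fun _ _ => hpnn _ _
  set q := p t.1 t.2 with hq
  have hsplit : ∀ (j r : ℕ) (x : A), ∑' k, ENNReal.ofReal (p x k) *
      (if j + (if (x, k) = t then 1 else 0) = r then 1 else 0) =
      (if j = r then 1 else 0) * (if x = t.1 then ENNReal.ofReal (1 - q) else 1) +
      (if j + 1 = r then 1 else 0) * (if x = t.1 then ENNReal.ofReal q else 0) := by
    intro j r x
    by_cases hx : x = t.1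
    · subst hx
      have e : ∀ k, (t.1, k) = t ↔ k = t.2 := by
        intro k; rw [Prod.ext_iff]; simp
      simp only [if_true]
      have hsum : ∀ k, ENNReal.ofReal (p t.1 k) *
          (if j + (if (t.1, k) = t then 1 else 0) = r then (1 : ℝ≥0∞) else 0) =
          (if k = t.2 then ENNReal.ofReal q * (if j + 1 = r then 1 else 0) else 0) +
          ENNReal.ofReal (if k = t.2 then 0 else p t.1 k) * (if j = r then 1 else 0) := by
        intro k
        by_cases hk : k = t.2
        · rw [if_pos ((e k).2 hk)]; subst hk; simp [hq]
        · rw [if_neg (mt (e k).1 hk)]; simp [hk]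
      simp only [hsum]
      rw [ENNReal.tsum_add, tsum_ite_eq, ENNReal.tsum_mul_right]
      have hs : HasSum (fun k => if k = t.2 then 0 else p t.1 k) (1 - q) := by
        have := (hp t.1).update t.2 0
        have e3 : (fun k => if k = t.2 then 0 else p t.1 k) = Function.update (p t.1) t.2 0 := by
          ext k; rw [Function.update_apply]
        have e4 : 1 - q = 0 - p t.1 t.2 + 1 := by rw [hq]; ring
        rw [e3, e4]; exact this
      rw [← ENNReal.ofReal_tsum_of_nonneg (fun k => by split_ifs; exact le_rfl; exact hpnn _ _) hs.summable,
        hs.tsum_eq]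
      ring
    · have e : ∀ k, ((x, k) = t) = False := by
        intro k; rw [Prod.ext_iff]; simp [hx]
      simp only [e, hx, if_false, add_zero, mul_zero, mul_one, ENNReal.tsum_mul_right,
        tsum_p hpnn hp, one_mul]
  induction n with
  | zero =>
    intro r φ
    rw [JJ_zero]
    simp only [ENNReal.tsum_mul_right, tsum_p hpnn hp, one_mul, EXe]
    congr 1; ext x; congr 2
    cases r <;> simp [binW]
  | succ n ih =>
    intro r φ
    rw [JJ_succ]
    simp only [ENNReal.tsum_mul_right, tsum_p hpnn hp, one_mul, EXe]
    rw [JJ_resample hpnn hp]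
    set φ' : ℕ → A → ℝ≥0∞ := fun m x =>
      ∑ y, ENNReal.ofReal (Q x y) * φ (m + if x = t.1 then 1 else 0) y with hφ'
    have e1 : (fun (m j : ℕ) (s : A × ℕ) => ∑' k, ENNReal.ofReal (p s.1 k) *
        ∑ y, ENNReal.ofReal (Q s.1 y) * ((if j + (if (s.1, k) = t then 1 else 0) = r then 1 else 0) *
          φ (m + if s.1 = t.1 then 1 else 0) y)) =
        fun m j s => ((if j = r then 1 else 0) * ((if s.1 = t.1 then ENNReal.ofReal (1 - q) else 1) * φ' m s.1))
          + ((if j + 1 = r then 1 else 0) * ((if s.1 = t.1 then ENNReal.ofReal q else 0) * φ' m s.1)) := by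
      ext m j s
      have : ∀ k, ENNReal.ofReal (p s.1 k) *
        ∑ y, ENNReal.ofReal (Q s.1 y) * ((if j + (if (s.1, k) = t then 1 else 0) = r then 1 else 0) *
          φ (m + if s.1 = t.1 then 1 else 0) y) = (ENNReal.ofReal (p s.1 k) *
          (if j + (if (s.1, k) = t then 1 else 0) = r then 1 else 0)) * φ' m s.1 := by
        intro k
        rw [mul_assoc, hφ']
        congr 1
        rw [Finset.mul_sum]
        congr 1; ext y; ring
      simp only [this]
      rw [ENNReal.tsum_mul_right, hsplit]
      ring
    rw [e1, JJ_add, ih r (fun m x => (if x = t.1 then ENNReal.ofReal (1 - q) else 1) * φ' m x)]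
    have e2 : ∀ m x, ∑ y, ENNReal.ofReal (Q x y) *
        (ENNReal.ofReal (binW q (m + if x = t.1 then 1 else 0) r) * φ (m + if x = t.1 then 1 else 0) y)
        = ENNReal.ofReal (binW q (m + if x = t.1 then 1 else 0) r) * φ' m x := by
      intro m x
      rw [hφ', Finset.mul_sum]
      congr 1; ext y; ring
    simp only [e2]
    have h1q : 0 ≤ 1 - q := by linarith
    cases r with
    | zero =>
      have : JJ Q η p t n (fun m j s => (if j + 1 = 0 then 1 else 0) *
        ((if s.1 = t.1 then ENNReal.ofReal q else 0) * φ' m s.1)) = 0 := by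
        simp [JJ]
      rw [this, add_zero]
      congr 1; ext m x
      by_cases hx : x = t.1
      · simp only [hx, if_true, binW_succ_zero, ENNReal.ofReal_mul h1q]; ring
      · simp [hx]
    | succ r =>
      simp only [Nat.add_right_cancel_iff]
      rw [ih r (fun m x => (if x = t.1 then ENNReal.ofReal q else 0) * φ' m x), ← EXe_add]
      congr 1; ext m x
      by_cases hx : x = t.1
      · simp only [hx, if_true, binW_succ_succ]
        rw [ENNReal.ofReal_add (mul_nonneg h1q (binW_nonneg hq0 hq1 _ _))
          (mul_nonneg hq0 (binW_nonneg hq0 hq1 _ _)), ENNReal.ofReal_mul h1q, ENNReal.ofReal_mul hq0]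
        ring
      · simp [hx]

end bridge

set_option linter.unusedSectionVars false
section law
variable {A : Type*} [Fintype A] [DecidableEq A] {Q : A → A → ℝ} {η : A → ℝ} {p : A → ℕ → ℝ}

lemma pathW_total (hQnn : ∀ x y, 0 ≤ Q x y) (hQ : ∀ x, ∑ y, Q x y = 1)
    (hηnn : ∀ a, 0 ≤ η a) (hηsum : ∑ a, η a = 1)
    (hpnn : ∀ a k, 0 ≤ p a k) (hp : ∀ a, HasSum (p a) 1) (n : ℕ) :
    ∑' z, pathW Q η p n z = 1 := by
  induction n with
  | zero =>
    rw [tsum_path_zero, tsum_pair]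
    simp only [pathW, Finset.univ_eq_empty, Finset.prod_empty, mul_one, ENNReal.tsum_mul_left,
      tsum_p hpnn hp]
    exact sum_ofReal_one η hηnn hηsum
  | succ n ih =>
    rw [tsum_snoc, ← ih]
    congr 1; ext z
    simp only [pathW_snoc]
    rw [ENNReal.tsum_mul_left, tsum_pair]
    simp only [ENNReal.tsum_mul_left, tsum_p hpnn hp, mul_one]
    rw [sum_ofReal_one _ (hQnn _) (hQ _), mul_one]

variable {Ω : Type*} [MeasurableSpace Ω] (P : Measure Ω) [IsProbabilityMeasure P]
    (Z : ℕ → Ω → A × ℕ)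

def pathY (Z : ℕ → Ω → A × ℕ) (n : ℕ) (ω : Ω) : Fin (n + 1) → A × ℕ := fun i => Z i ω

lemma law_path (hQnn : ∀ x y, 0 ≤ Q x y) (hηnn : ∀ a, 0 ≤ η a)
    (hpnn : ∀ a k, 0 ≤ p a k)
    (hZ : ∀ (n : ℕ) (a : ℕ → A) (k : ℕ → ℕ),
      P (⋂ i ∈ Finset.range (n + 1), {ω | Z i ω = (a i, k i)}) =
        ENNReal.ofReal ((η (a 0) * ∏ i ∈ Finset.range n, Q (a i) (a (i + 1))) *
          ∏ i ∈ Finset.range (n + 1), p (a i) (k i))) (n : ℕ) (z : Fin (n + 1) → A × ℕ) :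
    P (pathY Z n ⁻¹' {z}) = pathW Q η p n z := by
  have h := hZ n (fun i => (z (Fin.ofNat (n + 1) i)).1) (fun i => (z (Fin.ofNat (n + 1) i)).2)
  have e : ∀ i : Fin (n + 1), Fin.ofNat (n + 1) (i : ℕ) = i := by
    intro i; simp 
  have hset : (⋂ i ∈ Finset.range (n + 1), {ω | Z i ω = ((z (Fin.ofNat (n + 1) i)).1,
      (z (Fin.ofNat (n + 1) i)).2)}) = pathY Z n ⁻¹' {z} := by
    ext ω
    simp only [Set.mem_iInter, Finset.mem_range, Set.mem_ofPred_eq, Set.mem_preimage,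
      Set.mem_singleton_iff]
    constructor
    · intro h; ext1 i
      have := h i i.2
      rw [e] at this
      exact this
    · intro h i hi
      have := congrFun h ⟨i, hi⟩
      have e' := e ⟨i, hi⟩
      simp only at e'
      rw [e']
      exact this
  rw [hset] at h
  rw [h]
  unfold pathW
  rw [Finset.prod_range, Finset.prod_range, Fin.prod_univ_succ]
  have e0 : Fin.ofNat (n + 1) 0 = 0 := rfl
  have e1 : ∀ i : Fin n, Fin.ofNat (n + 1) (i : ℕ) = i.castSucc := fun i => by
    have := e i.castSucc
    simpa using this
  have e2 : ∀ i : Fin n, Fin.ofNat (n + 1) ((i : ℕ) + 1) = i.succ := fun i => by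
    have := e i.succ
    rwa [Fin.val_succ] at this
  simp only [e1, e2, Fin.val_succ, Fin.val_zero, e0]
  rw [ENNReal.ofReal_mul (mul_nonneg (hηnn _) (Finset.prod_nonneg fun i _ => hQnn _ _)),
    ENNReal.ofReal_mul (hηnn _), ENNReal.ofReal_mul (hpnn _ _),
    ENNReal.ofReal_prod_of_nonneg fun i _ => hQnn _ _,
    ENNReal.ofReal_prod_of_nonneg fun i _ => hpnn _ _, Finset.prod_mul_distrib]
  ring

lemma nullMeas_of_partition {ι : Type*} [Countable ι] (Y : Ω → ι)
    (h : ∑' i, P (Y ⁻¹' {i}) = 1) (s : Set ι) : NullMeasurableSet (Y ⁻¹' s) P := by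
  classical
  have hbound : ∀ s : Set ι, P (Y ⁻¹' s) ≤ ∑' i, s.indicator (fun i => P (Y ⁻¹' {i})) i := by
    intro s
    have : Y ⁻¹' s = ⋃ i ∈ s, Y ⁻¹' {i} := by ext ω; simp
    rw [this, ← _root_.tsum_subtype]
    exact measure_biUnion_le P (Set.to_countable s) _
  have hsum : P (Y ⁻¹' s) + P (Y ⁻¹' s)ᶜ ≤ 1 := by
    rw [← h, ← Set.preimage_compl]
    refine (add_le_add (hbound s) (hbound sᶜ)).trans ?_
    rw [← ENNReal.tsum_add]
    refine le_of_eq (tsum_congr fun i => ?_)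
    by_cases hi : i ∈ s <;> simp [hi]
  set E := Y ⁻¹' s
  set H := toMeasurable P E
  set H' := toMeasurable P Eᶜ
  have hH : MeasurableSet H := measurableSet_toMeasurable _ _
  have hH' : MeasurableSet H' := measurableSet_toMeasurable _ _
  have hEH : E ⊆ H := subset_toMeasurable _ _
  have hEH' : Eᶜ ⊆ H' := subset_toMeasurable _ _
  have hun : H ∪ H' = Set.univ := by
    ext ω; by_cases hω : ω ∈ E
    · simp [hEH hω]
    · simp [hEH' hω]
  have h1 := measure_union_add_inter (μ := P) H hH'
  rw [hun, measure_univ, measure_toMeasurable, measure_toMeasurable] at h1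
  have h2 : P (H ∩ H') = 0 := by
    have : 1 + P (H ∩ H') ≤ 1 + 0 := by rw [h1, add_zero]; exact hsum
    exact le_antisymm ((ENNReal.add_le_add_iff_left ENNReal.one_ne_top).1 this) (zero_le)
  have h3 : E =ᵐ[P] H := by
    refine hEH.eventuallyLE.antisymm ?_
    rw [ae_le_set]
    refine measure_mono_null ?_ h2
    intro ω hω
    exact ⟨hω.1, hEH' hω.2⟩
  exact ⟨H, hH, h3⟩

lemma law_lintegral (hQnn : ∀ x y, 0 ≤ Q x y) (hQ : ∀ x, ∑ y, Q x y = 1)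
    (hηnn : ∀ a, 0 ≤ η a) (hηsum : ∑ a, η a = 1)
    (hpnn : ∀ a k, 0 ≤ p a k) (hp : ∀ a, HasSum (p a) 1)
    (hZ : ∀ (n : ℕ) (a : ℕ → A) (k : ℕ → ℕ),
      P (⋂ i ∈ Finset.range (n + 1), {ω | Z i ω = (a i, k i)}) =
        ENNReal.ofReal ((η (a 0) * ∏ i ∈ Finset.range n, Q (a i) (a (i + 1))) *
          ∏ i ∈ Finset.range (n + 1), p (a i) (k i))) (n : ℕ) :
    (∀ F : (Fin (n + 1) → A × ℕ) → ℝ≥0∞,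
      ∫⁻ ω, F (pathY Z n ω) ∂P = ∑' z, pathW Q η p n z * F z) ∧
    (∀ F : (Fin (n + 1) → A × ℕ) → ℝ, AEStronglyMeasurable (fun ω => F (pathY Z n ω)) P) ∧
    (∀ s, NullMeasurableSet (pathY Z n ⁻¹' s) P) := by
  have hlaw := law_path P Z hQnn hηnn hpnn hZ n
  have htot : ∑' z, P (pathY Z n ⁻¹' {z}) = 1 := by
    simp only [hlaw]; exact pathW_total hQnn hQ hηnn hηsum hpnn hp n
  have hnull := nullMeas_of_partition P (pathY Z n) htot
  let _ : MeasurableSpace (Fin (n + 1) → A × ℕ) := ⊤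
  have : DiscreteMeasurableSpace (Fin (n + 1) → A × ℕ) := ⟨fun _ => trivial⟩
  have hY : AEMeasurable (pathY Z n) P :=
    NullMeasurable.aemeasurable (fun s _ => hnull s)
  refine ⟨fun F => ?_, fun F => ?_, hnull⟩
  · have h1 : ∫⁻ z, F z ∂(P.map (pathY Z n)) = ∫⁻ ω, F (pathY Z n ω) ∂P :=
      lintegral_map' (Measurable.of_discrete).aemeasurable hY
    rw [← h1, lintegral_countable']
    refine tsum_congr fun z => ?_
    rw [Measure.map_apply_of_aemeasurable hY (MeasurableSet.of_discrete), hlaw, mul_comm]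
  · exact ((Measurable.of_discrete (f := F)).comp_aemeasurable hY).aestronglyMeasurable
end law

set_option linter.unusedSectionVars false
section law2
variable {A : Type*} [Fintype A] [DecidableEq A] {Q : A → A → ℝ} {η : A → ℝ} {p : A → ℕ → ℝ}
variable {Ω : Type*} [MeasurableSpace Ω] (P : Measure Ω) [IsProbabilityMeasure P]
    (Z : ℕ → Ω → A × ℕ)

noncomputable def gfun (q : ℕ → ℝ) (r m : ℕ) : ℝ := ∑' k, q k * binW (q k) m r

lemma binW_le_one {q : ℝ} (h0 : 0 ≤ q) (h1 : q ≤ 1) (m r : ℕ) : binW q m r ≤ 1 := by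
  rcases Nat.lt_or_ge m r with h | h
  · simp [binW, Nat.choose_eq_zero_of_lt h]
  · have := add_pow q (1 - q) m
    have e : q + (1 - q) = 1 := by ring
    rw [e, one_pow] at this
    rw [this]
    have h2 : binW q m r = q ^ r * (1 - q) ^ (m - r) * (m.choose r : ℝ) := by unfold binW; ring
    rw [h2]
    have h3 : 0 ≤ 1 - q := by linarith
    exact Finset.single_le_sum (f := fun r => q ^ r * (1 - q) ^ (m - r) * (m.choose r : ℝ))
      (fun i _ => by positivity) (Finset.mem_range.2 (by omega))

lemma gfun_hasSum (q : ℕ → ℝ) (hq : ∀ k, 0 ≤ q k) (hq1 : HasSum q 1) (r m : ℕ) :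
    HasSum (fun k => q k * binW (q k) m r) (gfun q r m) := by
  have hle : ∀ k, q k ≤ 1 := fun k => le_hasSum hq1 k fun _ _ => hq _
  refine Summable.hasSum (Summable.of_nonneg_of_le (fun k => mul_nonneg (hq k) (binW_nonneg (hq k) (hle k) _ _)) (fun k => ?_) hq1.summable)
  exact mul_le_of_le_one_right (hq k) (binW_le_one (hq k) (hle k) _ _)

lemma numerator_eq (hQnn : ∀ x y, 0 ≤ Q x y) (hQ : ∀ x, ∑ y, Q x y = 1)
    (hηnn : ∀ a, 0 ≤ η a) (hηsum : ∑ a, η a = 1)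
    (hpnn : ∀ a k, 0 ≤ p a k) (hp : ∀ a, HasSum (p a) 1)
    (hZ : ∀ (n : ℕ) (a : ℕ → A) (k : ℕ → ℕ),
      P (⋂ i ∈ Finset.range (n + 1), {ω | Z i ω = (a i, k i)}) =
        ENNReal.ofReal ((η (a 0) * ∏ i ∈ Finset.range n, Q (a i) (a (i + 1))) *
          ∏ i ∈ Finset.range (n + 1), p (a i) (k i))) (n r : ℕ) :
    (P {ω | (∑ i ∈ Finset.range n, if Z i ω = Z n ω then 1 else 0 : ℕ) = r}).toReal =
      ∑ a, EX Q η a n (fun m x => (if x = a then 1 else 0) * gfun (p a) r m) := by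
  obtain ⟨h1, h2, h3⟩ := law_lintegral P Z hQnn hQ hηnn hηsum hpnn hp hZ n
  have hle : ∀ a k, p a k ≤ 1 := fun a k => le_hasSum (hp a) k fun _ _ => hpnn _ _
  set S : Set (Fin (n + 1) → A × ℕ) := {z | Mcnt (z (Fin.last n)) n z = r} with hS
  have hset : {ω | (∑ i ∈ Finset.range n, if Z i ω = Z n ω then 1 else 0 : ℕ) = r} =
      pathY Z n ⁻¹' S := by
    ext ω
    simp only [hS, Set.mem_ofPred_eq, Set.mem_preimage, Mcnt, pathY, Finset.sum_range]
    rfl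
  have e1 : P (pathY Z n ⁻¹' S) = ∑' z, pathW Q η p n z * (if Mcnt (z (Fin.last n)) n z = r then 1 else 0) := by
    rw [← h1 (fun z => if Mcnt (z (Fin.last n)) n z = r then 1 else 0), ← lintegral_indicator_one₀ (h3 S)]
    refine lintegral_congr fun ω => ?_
    by_cases hω : Mcnt (pathY Z n ω (Fin.last n)) n (pathY Z n ω) = r
    · rw [Set.indicator_of_mem (by exact hω), if_pos hω]; rfl
    · rw [Set.indicator_of_notMem (by exact hω), if_neg hω]
  have e2 : P (pathY Z n ⁻¹' S) = ∑' t : A × ℕ, JJ Q η p t n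
      (fun m j s => (if j = r then 1 else 0) * (if s = t then 1 else 0)) := by
    rw [e1]
    unfold JJ
    rw [ENNReal.tsum_comm]
    refine tsum_congr fun z => ?_
    rw [ENNReal.tsum_mul_left]
    congr 1
    rw [tsum_eq_single (z (Fin.last n))]
    · simp
    · intro t ht
      beta_reduce
      rw [if_neg (Ne.symm ht), mul_zero]
  have e3 : ∀ t : A × ℕ, JJ Q η p t n
      (fun m j s => (if j = r then 1 else 0) * (if s = t then 1 else 0)) =
      ENNReal.ofReal (EX Q η t.1 n (fun m x => (if x = t.1 then 1 else 0) *
        (p t.1 t.2 * binW (p t.1 t.2) m r))) := by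
    intro t
    rw [JJ_resample hpnn hp]
    have e4 : ∀ x, ∑' k, ENNReal.ofReal (p x k) * (if (x, k) = t then 1 else 0) =
        (if x = t.1 then ENNReal.ofReal (p t.1 t.2) else 0) := by
      intro x
      by_cases hx : x = t.1
      · rw [if_pos hx, tsum_eq_single t.2]
        · rw [if_pos (by rw [hx]), mul_one, hx]
        · intro k hk
          rw [if_neg (fun h => hk (by rw [← h])), mul_zero]
      · rw [if_neg hx, ENNReal.tsum_eq_zero]
        intro k
        rw [if_neg (fun h => hx (by rw [← h])), mul_zero]
    have e5 : (fun (m j : ℕ) (s : A × ℕ) => ∑' k, ENNReal.ofReal (p s.1 k) *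
        ((if j = r then 1 else 0) * (if (s.1, k) = t then 1 else 0))) =
        fun m j s => (if j = r then 1 else 0) * (if s.1 = t.1 then ENNReal.ofReal (p t.1 t.2) else 0) := by
      ext m j s
      rw [← e4, ← ENNReal.tsum_mul_left]
      refine tsum_congr fun k => ?_
      ring
    rw [e5, JJ_bin hpnn hp t n r (fun m x => (if x = t.1 then ENNReal.ofReal (p t.1 t.2) else 0)),
      ← EXe_ofReal hQnn hηnn]
    · congr 1; ext m x
      by_cases hx : x = t.1
      · simp only [hx, if_true, one_mul]
        rw [ENNReal.ofReal_mul (hpnn _ _), mul_comm]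
      · simp [hx]
    · intro m x
      have := mul_nonneg (hpnn t.1 t.2) (binW_nonneg (hpnn t.1 t.2) (hle _ _) m r)
      split_ifs <;> simp [this]
  have e6 : ∀ a, HasSum (fun k => EX Q η a n (fun m x => (if x = a then 1 else 0) *
        (p a k * binW (p a k) m r))) (EX Q η a n (fun m x => (if x = a then 1 else 0) * gfun (p a) r m)) := by
    intro a
    refine EX_hasSum n fun m x => ?_
    exact (gfun_hasSum (p a) (hpnn a) (hp a) r m).mul_left _
  have e7 : ∀ a k, 0 ≤ EX Q η a n (fun m x => (if x = a then 1 else 0) *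
        (p a k * binW (p a k) m r)) := by
    intro a k
    refine EX_nonneg hQnn hηnn n fun m x => ?_
    have := mul_nonneg (hpnn a k) (binW_nonneg (hpnn a k) (hle _ _) m r)
    split_ifs <;> simp [this]
  rw [hset, e2, tsum_pair]
  simp only [e3]
  have e8 : ∀ a, ∑' k, ENNReal.ofReal (EX Q η a n (fun m x => (if x = a then 1 else 0) *
        (p a k * binW (p a k) m r))) = ENNReal.ofReal (EX Q η a n (fun m x => (if x = a then 1 else 0) * gfun (p a) r m)) := by
    intro a
    rw [← ENNReal.ofReal_tsum_of_nonneg (e7 a) (e6 a).summable, (e6 a).tsum_eq]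
  simp only [e8]
  have e9 : ∀ a, 0 ≤ EX Q η a n (fun m x => (if x = a then 1 else 0) * gfun (p a) r m) :=
    fun a => (e6 a).nonneg (e7 a)
  rw [← ENNReal.ofReal_sum_of_nonneg fun a _ => e9 a, ENNReal.toReal_ofReal (Finset.sum_nonneg fun a _ => e9 a)]

lemma denominator_eq (hQnn : ∀ x y, 0 ≤ Q x y) (hQ : ∀ x, ∑ y, Q x y = 1)
    (hηnn : ∀ a, 0 ≤ η a) (hηsum : ∑ a, η a = 1)
    (hpnn : ∀ a k, 0 ≤ p a k) (hp : ∀ a, HasSum (p a) 1)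
    (hZ : ∀ (n : ℕ) (a : ℕ → A) (k : ℕ → ℕ),
      P (⋂ i ∈ Finset.range (n + 1), {ω | Z i ω = (a i, k i)}) =
        ENNReal.ofReal ((η (a 0) * ∏ i ∈ Finset.range n, Q (a i) (a (i + 1))) *
          ∏ i ∈ Finset.range (n + 1), p (a i) (k i))) (n : ℕ) (G : ℕ → ℝ) (hG : ∀ m, 0 ≤ G m) :
    ∫ ω, G (∑ i ∈ Finset.range n, if (Z i ω).1 = (Z n ω).1 then 1 else 0 : ℕ) ∂P =
      ∑ a, EX Q η a n (fun m x => (if x = a then 1 else 0) * G m) := by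
  obtain ⟨h1, h2, h3⟩ := law_lintegral P Z hQnn hQ hηnn hηsum hpnn hp hZ n
  have hfun : ∀ ω, (∑ i ∈ Finset.range n, if (Z i ω).1 = (Z n ω).1 then 1 else 0 : ℕ) =
      Ncnt (pathY Z n ω (Fin.last n)).1 n (pathY Z n ω) := by
    intro ω
    simp only [Ncnt, pathY, Finset.sum_range]
    rfl
  simp only [hfun]
  rw [integral_eq_lintegral_of_nonneg_ae (Eventually.of_forall fun ω => hG _)
    (h2 (fun z => G (Ncnt (z (Fin.last n)).1 n z))),
    h1 (fun z => ENNReal.ofReal (G (Ncnt (z (Fin.last n)).1 n z)))]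
  have hnn : ∀ a m (x : A), 0 ≤ (if x = a then 1 else 0) * G m := by
    intro a m x
    split_ifs <;> simp [hG m]
  have e2 : ∑' z, pathW Q η p n z * ENNReal.ofReal (G (Ncnt (z (Fin.last n)).1 n z)) =
      ∑ a : A, JJ Q η p (a, 0) n
      (fun m _ s => ENNReal.ofReal ((if s.1 = a then 1 else 0) * G m)) := by
    unfold JJ
    rw [← tsum_fintype (L := .unconditional _), ENNReal.tsum_comm]
    refine tsum_congr fun z => ?_
    rw [ENNReal.tsum_mul_left]
    congr 1
    rw [tsum_eq_single (z (Fin.last n)).1]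
    · simp
    · intro t ht
      beta_reduce
      rw [if_neg (Ne.symm ht), zero_mul, ENNReal.ofReal_zero]
  rw [e2]
  have e3 : ∀ a : A, JJ Q η p (a, 0) n
      (fun m _ s => ENNReal.ofReal ((if s.1 = a then 1 else 0) * G m)) =
      ENNReal.ofReal (EX Q η a n (fun m x => (if x = a then 1 else 0) * G m)) := by
    intro a
    rw [JJ_state hpnn hp (a, 0) n (fun m x => ENNReal.ofReal ((if x = a then 1 else 0) * G m))]
    exact EXe_ofReal hQnn hηnn a n _ (hnn a)
  simp only [e3]
  have e9 : ∀ a, 0 ≤ EX Q η a n (fun m x => (if x = a then 1 else 0) * G m) :=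
    fun a => EX_nonneg hQnn hηnn n (hnn a)
  rw [← ENNReal.ofReal_sum_of_nonneg fun a _ => e9 a, ENNReal.toReal_ofReal (Finset.sum_nonneg fun a _ => e9 a)]
end law2

structure RegU (U : ℝ → ℝ) (α : ℝ) : Prop where
  mono : ∀ x y, 0 < x → x ≤ y → U x ≤ U y
  nn : ∀ x, 0 ≤ U x
  le : ∀ x, 0 < x → U x ≤ x
  pos : ∀ᶠ x in atTop, 0 < U x
  rv : ∀ c, 0 < c → Tendsto (fun x => U (c * x) / U x) atTop (nhds (c ^ α))

lemma RegU.potter {U : ℝ → ℝ} {α : ℝ} (h : RegU U α) {β : ℝ} (hβ : α < β) (hβ0 : 0 < β) :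
    ∃ K x0 : ℝ, 0 < K ∧ 0 < x0 ∧ ∀ x, x0 ≤ x → ∀ l, 1 ≤ l → U (l * x) ≤ K * l ^ β * U x := by
  have h2 : (2 : ℝ) ^ α < 2 ^ β := Real.rpow_lt_rpow_of_exponent_lt (by norm_num) hβ
  have h3 := ((h.rv 2 (by norm_num)).eventually (gt_mem_nhds h2)).and h.pos
  obtain ⟨x1, hx1⟩ := eventually_atTop.1 h3
  refine ⟨2 ^ β, max x1 1, by positivity, by positivity, ?_⟩
  have hstep : ∀ x, max x1 1 ≤ x → U (2 * x) ≤ 2 ^ β * U x := by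
    intro x hx
    obtain ⟨h4, h5⟩ := hx1 x ((le_max_left _ _).trans hx)
    exact ((div_lt_iff₀ h5).1 h4).le
  have hiter : ∀ (j : ℕ) x, max x1 1 ≤ x → U (2 ^ j * x) ≤ ((2 : ℝ) ^ β) ^ j * U x := by
    intro j
    induction j with
    | zero => intro x _; simp
    | succ j ih =>
      intro x hx
      have hx0 : 1 ≤ x := (le_max_right _ _).trans hx
      have h6 := hstep (2 ^ j * x) (hx.trans (le_mul_of_one_le_left (by linarith) (one_le_pow₀ (by norm_num))))
      have e : (2 : ℝ) ^ (j + 1) * x = 2 * (2 ^ j * x) := by ring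
      rw [e]
      refine h6.trans ?_
      rw [pow_succ', mul_assoc]
      exact mul_le_mul_of_nonneg_left (ih x hx) (by positivity)
  intro x hx l hl
  have hx0 : 1 ≤ x := (le_max_right _ _).trans hx
  obtain ⟨j, hj1, hj2⟩ := exists_nat_pow_near hl (by norm_num : (1 : ℝ) < 2)
  have h7 : U (l * x) ≤ U (2 ^ (j + 1) * x) :=
    h.mono _ _ (by positivity) (mul_le_mul_of_nonneg_right hj2.le (by linarith))
  refine h7.trans ((hiter (j + 1) x hx).trans ?_)
  refine mul_le_mul_of_nonneg_right ?_ (h.nn x)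
  rw [pow_succ']
  refine mul_le_mul_of_nonneg_left ?_ (by positivity)
  rw [← Real.rpow_natCast, ← Real.rpow_mul (by norm_num), mul_comm, Real.rpow_mul (by norm_num),
    Real.rpow_natCast]
  exact Real.rpow_le_rpow (by positivity) hj1 hβ0.le

lemma RegU.tendsto {U : ℝ → ℝ} {α : ℝ} (h : RegU U α) (hα : 0 < α) : Tendsto U atTop atTop := by
  have h2 : (1 : ℝ) < 2 ^ α := Real.one_lt_rpow (by norm_num) hα
  obtain ⟨l, hl1, hl2⟩ := exists_between h2
  have h3 := ((h.rv 2 (by norm_num)).eventually (lt_mem_nhds hl2)).and h.pos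
  obtain ⟨x1, hx1⟩ := eventually_atTop.1 h3
  set x0 := max x1 1
  have hx0 : 1 ≤ x0 := le_max_right _ _
  have hiter : ∀ (j : ℕ), l ^ j * U x0 ≤ U (2 ^ j * x0) := by
    intro j
    induction j with
    | zero => simp
    | succ j ih =>
      have h7 : x0 ≤ 2 ^ j * x0 := le_mul_of_one_le_left (by linarith) (one_le_pow₀ (by norm_num))
      obtain ⟨h4, h5⟩ := hx1 (2 ^ j * x0) ((le_max_left _ _).trans h7)
      have e : (2 : ℝ) ^ (j + 1) * x0 = 2 * (2 ^ j * x0) := by ring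
      have h6 := ((lt_div_iff₀ h5).1 h4).le
      rw [e]
      refine le_trans ?_ h6
      rw [pow_succ', mul_assoc]
      exact mul_le_mul_of_nonneg_left ih (by linarith)
  have hU0 : 0 < U x0 := (hx1 x0 (le_max_left _ _)).2
  rw [tendsto_atTop]
  intro b
  have h8 : Tendsto (fun j : ℕ => l ^ j * U x0) atTop atTop :=
    (tendsto_pow_atTop_atTop_of_one_lt hl1).atTop_mul_const hU0
  obtain ⟨j, hj⟩ := (h8.eventually_ge_atTop b).exists
  filter_upwards [eventually_ge_atTop (2 ^ j * x0)] with x hx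
  exact hj.trans ((hiter j).trans (h.mono _ _ (by positivity) hx))

lemma RegU.local_unif {U : ℝ → ℝ} {α : ℝ} (h : RegU U α) (hα : 0 < α) {c : ℝ} (hc : 0 < c) (G : ℕ → ℝ) (D : ℝ)
    (hG : Tendsto (fun m : ℕ => G m / (U m / m)) atTop (nhds D)) (ε : ℝ) (hε : 0 < ε) :
    ∃ δ > 0, ∀ᶠ n : ℕ in atTop, ∀ m : ℕ, |(m : ℝ) / n - c| ≤ δ →
      |G m / (U n / n) - D * c ^ (α - 1)| ≤ ε := by
  set F : Filter (ℕ × ℕ) := (atTop.comap Prod.fst) ⊓ ((nhds c).comap (fun z => (z.2 : ℝ) / z.1)) with hF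
  have hn : Tendsto (fun z : ℕ × ℕ => z.1) F atTop := tendsto_comap.mono_left inf_le_left
  have hq : Tendsto (fun z : ℕ × ℕ => (z.2 : ℝ) / z.1) F (nhds c) := tendsto_comap.mono_left inf_le_right
  have hnR : Tendsto (fun z : ℕ × ℕ => (z.1 : ℝ)) F atTop := tendsto_natCast_atTop_atTop.comp hn
  have hn1 : ∀ᶠ z in F, (1 : ℝ) ≤ z.1 := hnR.eventually_ge_atTop 1
  have hmR : Tendsto (fun z : ℕ × ℕ => (z.2 : ℝ)) F atTop := by
    refine (hq.pos_mul_atTop hc hnR).congr' ?_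
    filter_upwards [hn1] with z hz
    field_simp
  have hm : Tendsto (fun z : ℕ × ℕ => z.2) F atTop := tendsto_natCast_atTop_iff.1 hmR
  have hm1 : ∀ᶠ z in F, (1 : ℝ) ≤ z.2 := hmR.eventually_ge_atTop 1
  have hUn : ∀ᶠ z in F, 0 < U z.1 := hnR.eventually h.pos
  have hUm : ∀ᶠ z in F, 0 < U z.2 := hmR.eventually h.pos
  have hcont : Tendsto (fun x : ℝ => x ^ α) (nhds c) (nhds (c ^ α)) :=
    (Real.continuousAt_rpow_const c α (Or.inl hc.ne')).tendsto
  have hUU : Tendsto (fun z : ℕ × ℕ => U z.2 / U z.1) F (nhds (c ^ α)) := by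
    rw [tendsto_order]
    constructor
    · intro a ha
      have h1 : ∀ᶠ x in nhdsWithin c (Set.Iio c), a < x ^ α ∧ 0 < x :=
        nhdsWithin_le_nhds ((hcont.eventually (lt_mem_nhds ha)).and (lt_mem_nhds hc))
      obtain ⟨c', ⟨h2, h3⟩, h4⟩ := (h1.and self_mem_nhdsWithin).exists
      have h5 := hnR.eventually ((h.rv c' h3).eventually (lt_mem_nhds h2))
      filter_upwards [h5, hq.eventually (lt_mem_nhds h4), hUn, hn1] with z h6 h7 h8 h9
      refine h6.trans_le (div_le_div_of_nonneg_right ?_ h8.le)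
      exact h.mono _ _ (by positivity) ((lt_div_iff₀ (by linarith)).1 h7).le
    · intro a ha
      have h1 : ∀ᶠ x in nhdsWithin c (Set.Ioi c), x ^ α < a :=
        nhdsWithin_le_nhds (hcont.eventually (gt_mem_nhds ha))
      obtain ⟨c', h2, h4⟩ := (h1.and self_mem_nhdsWithin).exists
      have h4 : c < c' := h4
      have h5 := hnR.eventually ((h.rv c' (hc.trans h4)).eventually (gt_mem_nhds h2))
      filter_upwards [h5, hq.eventually (gt_mem_nhds h4), hUn, hn1, hm1] with z h6 h7 h8 h9 h10
      refine lt_of_le_of_lt (div_le_div_of_nonneg_right ?_ h8.le) h6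
      exact h.mono _ _ (by linarith) ((div_lt_iff₀ (by linarith)).1 h7).le
  have hmain : Tendsto (fun z : ℕ × ℕ => G z.2 / (U z.1 / z.1)) F (nhds (D * c ^ (α - 1))) := by
    have h1 := (hG.comp hm).mul (hUU.mul (hq.inv₀ hc.ne'))
    have e : c ^ α * c⁻¹ = c ^ (α - 1) := by rw [Real.rpow_sub_one hc.ne', div_eq_mul_inv]
    rw [e] at h1
    refine h1.congr' ?_
    filter_upwards [hn1, hm1, hUn, hUm] with z h1 h2 h3 h4
    have : (z.1 : ℝ) ≠ 0 := by positivity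
    have : (z.2 : ℝ) ≠ 0 := by positivity
    simp only [Function.comp]
    field_simp
  have hb : F.HasBasis (fun i : ℕ × ℝ => True ∧ 0 < i.2) (fun i => (Prod.fst ⁻¹' Set.Ici i.1) ∩
      ((fun z : ℕ × ℕ => (z.2 : ℝ) / z.1) ⁻¹' Metric.closedBall c i.2)) :=
    (atTop_basis.comap _).inf (Metric.nhds_basis_closedBall.comap _)
  have hev := hmain.eventually (Metric.closedBall_mem_nhds _ hε)
  obtain ⟨⟨N, δ⟩, ⟨_, hδ⟩, hsub⟩ := hb.mem_iff.1 hev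
  refine ⟨δ, hδ, ?_⟩
  filter_upwards [eventually_ge_atTop N] with n hn m hm
  have := @hsub (n, m) ⟨hn, by simpa [Real.dist_eq] using hm⟩
  simpa [Real.dist_eq] using this

lemma EX_limit {A : Type*} [Fintype A] [DecidableEq A] {Q : A → A → ℝ} {η : A → ℝ} 
    [Nonempty A] (hQnn : ∀ x y, 0 ≤ Q x y) (hQ : ∀ x, ∑ y, Q x y = 1)
    (hprim : ∃ t : ℕ, ∀ a b, 0 < mpow Q t a b)
    {π : A → ℝ} (hπpos : ∀ x, 0 < π x) (hπsum : ∑ x, π x = 1)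
    (hstat : ∀ x, ∑ y, π y * Q y x = π x) (hηnn : ∀ a, 0 ≤ η a) (hηsum : ∑ a, η a = 1)
    {U : ℝ → ℝ} {α : ℝ} (h : RegU U α) (hα : 0 < α) (G : ℕ → ℝ) (D : ℝ)
    (hG : Tendsto (fun m : ℕ => G m / (U m / m)) atTop (nhds D)) (a : A) :
    Tendsto (fun n : ℕ => EX Q η a n (fun m x => (if x = a then 1 else 0) * G m) / (U n / n)) atTop
      (nhds (D * π a ^ α)) := by
  set c := π a with hcdef
  have hc : 0 < c := hπpos a
  obtain ⟨K, hK0, hK⟩ := EX_var hQnn hQ hprim hπpos hπsum hstat hηnn hηsum a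
  have hUnat : Tendsto (fun n : ℕ => U n) atTop atTop := (h.tendsto hα).comp tendsto_natCast_atTop_atTop
  -- boundedness
  obtain ⟨B, hB0, hB⟩ : ∃ B, 0 ≤ B ∧ ∀ m, |G m| ≤ B := by
    have h1 : ∀ᶠ m : ℕ in atTop, |G m| ≤ |D| + 1 := by
      filter_upwards [hG.abs.eventually (gt_mem_nhds (lt_add_one |D|)), hUnat.eventually_gt_atTop 0,
        eventually_ge_atTop 1] with m h1 h2 h3
      have h4 : (0 : ℝ) < m := by exact_mod_cast h3
      have h5 : U m / m ≤ 1 := by rw [div_le_one h4]; exact h.le _ h4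
      have h6 : 0 < U m / m := by positivity
      rw [abs_div, abs_of_pos h6, div_lt_iff₀ h6] at h1
      nlinarith [abs_nonneg D]
    obtain ⟨N, hN⟩ := eventually_atTop.1 h1
    refine ⟨(|D| + 1) + ∑ i ∈ Finset.range N, |G i|, by positivity, fun m => ?_⟩
    rcases Nat.lt_or_ge m N with hm | hm
    · have := Finset.single_le_sum (f := fun i => |G i|) (fun i _ => abs_nonneg _) (Finset.mem_range.2 hm)
      have h0 := abs_nonneg D
      linarith
    · have : 0 ≤ ∑ i ∈ Finset.range N, |G i| := Finset.sum_nonneg fun i _ => abs_nonneg _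
      linarith [hN m hm]
  set E := D * c ^ (α - 1) with hE
  set T : ℕ → ℝ := fun n => EX Q η a n (fun m x => (if x = a then 1 else 0) * (G m / (U n / n) - E)) with hT
  have hTeq : ∀ n, EX Q η a n (fun m x => (if x = a then 1 else 0) * G m) / (U n / n) =
      T n + E * EX Q η a n (fun _ x => if x = a then 1 else 0) := by
    intro n
    rw [hT, div_eq_inv_mul, ← EX_smul, ← EX_smul, ← EX_add]
    congr 1; ext m x
    rw [div_eq_mul_inv]; ring
  have hT0 : Tendsto T atTop (nhds 0) := by
    rw [Metric.tendsto_atTop']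
    intro ε hε
    obtain ⟨δ, hδ, hev⟩ := h.local_unif hα hc G D hG (ε / 2) (by positivity)
    set b : ℕ → ℝ := fun n => B / (U n / n) + |E| with hb
    set κ : ℕ → ℝ := fun n => b n / (δ * n) ^ 2 with hκ
    have hκ0 : Tendsto (fun n : ℕ => κ n * (K * (n + 1))) atTop (nhds 0) := by
      have h1 : Tendsto (fun n : ℕ => (B / U n + |E| / n) * (K / δ ^ 2 * (1 + 1 / (n : ℝ)))) atTop
          (nhds ((0 + 0) * (K / δ ^ 2 * (1 + 0)))) := by
        refine Tendsto.mul ((hUnat.const_div_atTop B).add (tendsto_const_div_atTop_nhds_zero_nat _)) ?_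
        exact (tendsto_const_nhds.add (tendsto_const_div_atTop_nhds_zero_nat 1)).const_mul _
      simp only [add_zero, zero_mul] at h1
      refine h1.congr' ?_
      filter_upwards [hUnat.eventually_gt_atTop 0, eventually_ge_atTop 1] with n h2 h3
      have h4 : (0 : ℝ) < n := by exact_mod_cast h3
      simp only [hκ, hb]
      field_simp
    have hev2 := hκ0.eventually (gt_mem_nhds (half_pos hε))
    obtain ⟨N, hN⟩ := eventually_atTop.1 (((hev.and hev2).and (hUnat.eventually_gt_atTop 0)).and (eventually_ge_atTop 1))
    refine ⟨N, fun n hn => ?_⟩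
    obtain ⟨⟨⟨h1, h2⟩, h3⟩, h4⟩ := hN n hn.le
    have hn0 : (0 : ℝ) < n := by exact_mod_cast h4
    have hR : 0 < U n / n := by positivity
    have hb0 : 0 ≤ b n := by simp only [hb]; positivity
    have hκn : 0 ≤ κ n := by simp only [hκ]; positivity
    have hpt : ∀ (m : ℕ) (x : A), |(if x = a then 1 else 0) * (G m / (U n / n) - E)| ≤
        ε / 2 + κ n * ((m : ℝ) - c * n) ^ 2 := by
      intro m x
      have h5 : |(if x = a then 1 else 0) * (G m / (U n / n) - E)| ≤ |G m / (U n / n) - E| := by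
        split_ifs <;> simp
      refine h5.trans ?_
      by_cases hm : |(m : ℝ) / n - c| ≤ δ
      · have := h1 m hm
        have : 0 ≤ κ n * ((m : ℝ) - c * n) ^ 2 := by positivity
        linarith
      · push Not at hm
        have h6 : |G m / (U n / n) - E| ≤ b n := by
          refine (abs_sub _ _).trans ?_
          rw [abs_div, abs_of_pos hR]
          simp only [hb]
          have := div_le_div_of_nonneg_right (hB m) hR.le
          linarith
        have h7 : b n ≤ κ n * ((m : ℝ) - c * n) ^ 2 := by
          have e : κ n * ((m : ℝ) - c * n) ^ 2 = b n * (((m : ℝ) / n - c) / δ) ^ 2 := by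
            simp only [hκ]; field_simp
          rw [e]
          refine le_mul_of_one_le_right hb0 ?_
          rw [one_le_sq_iff_one_le_abs, abs_div, abs_of_pos hδ, one_le_div hδ]
          exact hm.le
        linarith
    have hbd : EX Q η a n (fun m _ => ε / 2 + κ n * ((m : ℝ) - c * n) ^ 2) < ε := by
      rw [EX_add, EX_const hQ hηsum, EX_smul]
      have := mul_le_mul_of_nonneg_left (hK n) hκn
      linarith
    have hup : T n ≤ EX Q η a n (fun m _ => ε / 2 + κ n * ((m : ℝ) - c * n) ^ 2) :=
      EX_mono hQnn hηnn n fun m x => (le_abs_self _).trans (hpt m x)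
    have hlo : (-1) * T n ≤ EX Q η a n (fun m _ => ε / 2 + κ n * ((m : ℝ) - c * n) ^ 2) := by
      rw [hT, ← EX_smul]
      refine EX_mono hQnn hηnn n fun m x => ?_
      rw [neg_one_mul]
      exact (neg_le_abs _).trans (hpt m x)
    rw [Real.dist_eq, sub_zero, abs_lt]
    constructor <;> linarith
  have hfin := hT0.add ((EX_prob_tendsto (η := η) (a := a) hQnn hQ hprim hπpos hπsum hstat hηsum).const_mul E)
  have e : (0 : ℝ) + E * π a = D * c ^ α := by
    rw [hE, ← hcdef, zero_add, mul_assoc, Real.rpow_sub_one hc.ne']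
    field_simp
  rw [e] at hfin
  exact hfin.congr fun n => (hTeq n).symm

lemma nuR_summable {A : Type*} (p : A → ℕ → ℝ) (a : A) (hp : HasSum (p a) 1)
    {ε : ℝ} (hε : 0 < ε) : (Function.support (fun k => if ε ≤ p a k then (1 : ℝ) else 0)).Finite := by
  have h1 := hp.summable.tendsto_cofinite_zero
  have h2 := h1.eventually (gt_mem_nhds hε)
  rw [Filter.eventually_cofinite] at h2
  refine h2.subset fun k hk => ?_
  simp only [Function.mem_support, ne_eq, ite_eq_right_iff, one_ne_zero, imp_false, not_not] at hk
  simpa using hk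

open scoped Classical in
lemma nuR_hasSum {A : Type*} (p : A → ℕ → ℝ) (a : A) (hp : HasSum (p a) 1)
    {ε : ℝ} (hε : 0 < ε) : HasSum (fun k => if ε ≤ p a k then (1 : ℝ) else 0) (nuR p a ε) := by
  have := nuR_summable p a hp hε
  have h2 : Summable (fun k => if ε ≤ p a k then (1 : ℝ) else 0) :=
    summable_of_hasFiniteSupport (by
      refine this.subset fun k hk => ?_
      simpa using hk)
  exact h2.hasSum

lemma nuR_nonneg {A : Type*} (p : A → ℕ → ℝ) (a : A) (ε : ℝ) : 0 ≤ nuR p a ε := by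
  classical
  unfold nuR
  exact tsum_nonneg fun k => by split_ifs <;> norm_num

lemma nuR_anti {A : Type*} (p : A → ℕ → ℝ) (a : A) (hp : HasSum (p a) 1)
    {ε δ : ℝ} (hε : 0 < ε) (h : ε ≤ δ) : nuR p a δ ≤ nuR p a ε := by
  classical
  refine hasSum_le (fun k => ?_) (nuR_hasSum p a hp (hε.trans_le h)) (nuR_hasSum p a hp hε)
  split_ifs with h1 h2
  · exact le_rfl
  · exact absurd (h.trans h1) h2
  · norm_num
  · norm_num

lemma nuR_mul_le {A : Type*} (p : A → ℕ → ℝ) (a : A) (hpnn : ∀ k, 0 ≤ p a k) (hp : HasSum (p a) 1)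
    {ε : ℝ} (hε : 0 < ε) : ε * nuR p a ε ≤ 1 := by
  classical
  refine hasSum_le (fun k => ?_) ((nuR_hasSum p a hp hε).mul_left ε) hp
  split_ifs with h1
  · simpa using h1
  · simpa using hpnn k

lemma nuR_zero {A : Type*} (p : A → ℕ → ℝ) (a : A) (hpnn : ∀ k, 0 ≤ p a k) (hp : HasSum (p a) 1)
    {ε : ℝ} (hε : 1 < ε) : nuR p a ε = 0 := by
  classical
  unfold nuR
  refine (tsum_congr fun k => ?_).trans tsum_zero
  rw [if_neg]
  have := le_hasSum hp k (fun j _ => hpnn j)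
  linarith

noncomputable def psiF (r m : ℕ) (y : ℝ) : ℝ :=
  (m.choose r : ℝ) * (y / m) ^ r * ((r + 1) * (1 - y / m) ^ (m - r)
    - ((m - r : ℕ) : ℝ) * (y / m) * (1 - y / m) ^ (m - r - 1))

lemma psiF_cont (r m : ℕ) : Continuous (psiF r m) := by
  unfold psiF; fun_prop

lemma psiF_deriv (r m : ℕ) (hm : 0 < m) (y : ℝ) :
    HasDerivAt (fun y : ℝ => (m : ℝ) * ((m.choose r : ℝ) * (y / m) ^ (r + 1) * (1 - y / m) ^ (m - r)))
      (psiF r m y) y := by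
  have hm' : (m : ℝ) ≠ 0 := by positivity
  have h1 : HasDerivAt (fun y : ℝ => y / m) (1 / m) y := (hasDerivAt_id y).div_const _
  have h2 := (h1.pow (r + 1)).const_mul (m.choose r : ℝ)
  have h3 := (h1.const_sub 1).pow (m - r)
  have h4 := (h2.mul h3).const_mul (m : ℝ)
  refine h4.congr_deriv ?_
  unfold psiF
  push_cast
  simp only [pow_succ, Pi.pow_apply]
  field_simp
  ring

lemma psiF_integral (r m : ℕ) (hm : 0 < m) (q : ℝ) :
    ∫ y in (0 : ℝ)..(m * q), psiF r m y = m * (q * binW q m r) := by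
  have hm' : (m : ℝ) ≠ 0 := by positivity
  rw [intervalIntegral.integral_eq_sub_of_hasDerivAt (fun y _ => psiF_deriv r m hm y)
    ((psiF_cont r m).intervalIntegrable _ _)]
  unfold binW
  rw [mul_div_cancel_left₀ q hm']
  simp
  left; ring

open scoped Classical in
lemma gfun_integral {A : Type*} (p : A → ℕ → ℝ) (a : A) (hpnn : ∀ k, 0 ≤ p a k)
    (hp : HasSum (p a) 1) (r m : ℕ) (hm : 0 < m) :
    m * gfun (p a) r m = ∫ y in Set.Ioi (0 : ℝ), psiF r m y * nuR p a (y / m) := by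
  have hm' : (0 : ℝ) < m := by positivity
  obtain ⟨B, hB⟩ : ∃ B, ∀ y ∈ Set.Icc (0 : ℝ) m, ‖psiF r m y‖ ≤ B :=
    isCompact_Icc.exists_bound_of_continuousOn (psiF_cont r m).continuousOn
  have hle1 : ∀ k, p a k ≤ 1 := fun k => le_hasSum hp k (fun j _ => hpnn j)
  have hind : ∀ k, (fun y => psiF r m y * (if y / m ≤ p a k then (1 : ℝ) else 0))
      = (Set.Iic (m * p a k)).indicator (psiF r m) := by
    intro k; ext y
    simp only [Set.indicator, Set.mem_Iic, div_le_iff₀' hm']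
    split_ifs <;> simp
  have hinteg : ∀ (f : ℝ → ℝ) k, ∫ y in Set.Ioi (0 : ℝ), (Set.Iic (m * p a k)).indicator f y
      = ∫ y in (0 : ℝ)..(m * p a k), f y := by
    intro f k
    rw [setIntegral_indicator measurableSet_Iic, Set.Ioi_inter_Iic,
      intervalIntegral.integral_of_le (mul_nonneg hm'.le (hpnn k))]
  have h1 := hasSum_integral_of_summable_integral_norm (μ := volume.restrict (Set.Ioi (0 : ℝ)))
    (F := fun k y => psiF r m y * (if y / m ≤ p a k then (1 : ℝ) else 0)) ?_ ?_
  · have h2 : ∀ k, ∫ y in Set.Ioi (0 : ℝ), psiF r m y * (if y / m ≤ p a k then (1 : ℝ) else 0)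
        = m * (p a k * binW (p a k) m r) := by
      intro k
      rw [hind k, hinteg, psiF_integral r m hm]
    simp only [h2, tsum_mul_left] at h1
    have h3 := (gfun_hasSum (p a) hpnn hp r m).mul_left (m : ℝ)
    exact h3.unique h1
  · intro k
    rw [hind k, integrable_indicator_iff measurableSet_Iic, IntegrableOn,
      Measure.restrict_restrict measurableSet_Iic, Set.Iic_inter_Ioi]
    exact ((psiF_cont r m).integrableOn_Icc).mono_set Set.Ioc_subset_Icc_self
  · have hs : Summable fun k => B * (m * p a k) := (hp.summable.mul_left _).mul_left _
    refine Summable.of_nonneg_of_le (fun k => integral_nonneg fun y => norm_nonneg _) (fun k => ?_) hs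
    have : (fun y => ‖psiF r m y * (if y / m ≤ p a k then (1 : ℝ) else 0)‖)
      = (Set.Iic (m * p a k)).indicator (fun y => ‖psiF r m y‖) := by
      ext y
      simp only [Set.indicator, Set.mem_Iic, div_le_iff₀' hm']
      split_ifs <;> simp
    rw [this, hinteg]
    have h0 : 0 ≤ m * p a k := mul_nonneg hm'.le (hpnn k)
    have h4 := intervalIntegral.norm_integral_le_of_norm_le_const (a := 0) (b := m * p a k)
      (f := fun y => ‖psiF r m y‖) (C := B) (fun y hy => by
        rw [Set.uIoc_of_le h0] at hy
        rw [norm_norm]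
        exact hB y ⟨hy.1.le, hy.2.trans (by nlinarith [hle1 k])⟩)
    rw [sub_zero, abs_of_nonneg h0] at h4
    exact (le_abs_self _).trans h4

lemma psiF_bound (r m : ℕ) (hm : 2 * r + 2 ≤ m) (y : ℝ) (hy : 0 ≤ y) (hym : y ≤ m) :
    |psiF r m y| ≤ y ^ r * ((r + 1) + y) * Real.exp (-(1/2) * y) := by
  have hm' : (0 : ℝ) < m := by exact_mod_cast (by omega : 0 < m)
  have ht0 : 0 ≤ y / m := by positivity
  have ht1 : y / m ≤ 1 := (div_le_one hm').2 hym
  have hc : (m.choose r : ℝ) * (y / m) ^ r ≤ y ^ r := by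
    have : (m.choose r : ℝ) ≤ m ^ r := by exact_mod_cast Nat.choose_le_pow m r
    calc (m.choose r : ℝ) * (y / m) ^ r ≤ m ^ r * (y / m) ^ r := by gcongr
      _ = y ^ r := by rw [← mul_pow, mul_div_cancel₀ _ hm'.ne']
  have hc0 : 0 ≤ (m.choose r : ℝ) * (y / m) ^ r := by positivity
  have he : ∀ s : ℕ, m ≤ 2 * s → (1 - y / m) ^ s ≤ Real.exp (-(1/2) * y) := by
    intro s hs
    have h1 : 1 - y / m ≤ Real.exp (-(y / m)) := by
      have := Real.add_one_le_exp (-(y / m)); linarith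
    have h2 : (1 - y / m) ^ s ≤ Real.exp (-(y / m)) ^ s := pow_le_pow_left₀ (by linarith) h1 s
    refine h2.trans ?_
    rw [← Real.exp_nat_mul]
    apply Real.exp_le_exp.2
    have hs' : (m : ℝ) ≤ 2 * s := by exact_mod_cast hs
    have : y = m * (y / m) := by field_simp
    nlinarith
  have e1 := he (m - r) (by omega)
  have e2 := he (m - r - 1) (by omega)
  have p1 : 0 ≤ (1 - y / m) ^ (m - r) := pow_nonneg (by linarith) _
  have p2 : 0 ≤ (1 - y / m) ^ (m - r - 1) := pow_nonneg (by linarith) _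
  have h3 : ((m - r : ℕ) : ℝ) * (y / m) ≤ y := by
    have : ((m - r : ℕ) : ℝ) ≤ m := by exact_mod_cast Nat.sub_le m r
    calc _ ≤ (m : ℝ) * (y / m) := by gcongr
      _ = y := by field_simp
  have h30 : 0 ≤ ((m - r : ℕ) : ℝ) * (y / m) := by positivity
  unfold psiF
  rw [abs_mul, abs_of_nonneg hc0, mul_assoc (y ^ r)]
  refine mul_le_mul hc ?_ (abs_nonneg _) (by positivity)
  refine (abs_sub _ _).trans ?_
  rw [add_mul _ y, abs_of_nonneg (mul_nonneg (by positivity) p1), abs_of_nonneg (mul_nonneg h30 p2)]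
  exact add_le_add (mul_le_mul_of_nonneg_left e1 (by positivity)) (mul_le_mul h3 e2 p2 hy)

lemma psiF_tendsto (r : ℕ) (y : ℝ) :
    Tendsto (fun m : ℕ => psiF r m y) atTop
      (nhds (y ^ r / r.factorial * ((r + 1) * Real.exp (-y) - y * Real.exp (-y)))) := by
  have hdiv : Tendsto (fun m : ℕ => y / (m : ℝ)) atTop (nhds 0) :=
    tendsto_const_div_atTop_nhds_zero_nat y
  have hsub : Tendsto (fun m : ℕ => 1 - y / (m : ℝ)) atTop (nhds 1) := by
    simpa using hdiv.const_sub 1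
  have hexp : Tendsto (fun m : ℕ => (1 - y / (m : ℝ)) ^ m) atTop (nhds (Real.exp (-y))) := by
    refine (Real.tendsto_one_add_div_pow_exp (-y)).congr fun m => ?_
    rw [neg_div, ← sub_eq_add_neg]
  have hs : ∀ s : ℕ, Tendsto (fun m : ℕ => (1 - y / (m : ℝ)) ^ (m - s)) atTop (nhds (Real.exp (-y))) := by
    intro s
    have h1 := hexp.div (hsub.pow s) (by simp)
    rw [one_pow, div_one] at h1
    refine h1.congr' ?_
    filter_upwards [hsub.eventually (lt_mem_nhds one_pos), eventually_ge_atTop s] with m hm hms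
    show (1 - y / (m : ℝ)) ^ m / (1 - y / (m : ℝ)) ^ s = _
    rw [div_eq_iff (by positivity), ← pow_add, Nat.sub_add_cancel hms]
  have hlin : ∀ s : ℕ, Tendsto (fun m : ℕ => ((m - s : ℕ) : ℝ) / m) atTop (nhds 1) := by
    intro s
    have h1 : Tendsto (fun m : ℕ => 1 - (s : ℝ) / (m : ℝ)) atTop (nhds 1) := by
      simpa using (tendsto_const_div_atTop_nhds_zero_nat (s : ℝ)).const_sub 1
    refine h1.congr' ?_
    filter_upwards [eventually_ge_atTop s, eventually_gt_atTop 0] with m hms hm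
    have : (m : ℝ) ≠ 0 := by positivity
    rw [Nat.cast_sub hms]; field_simp
  have hch : Tendsto (fun m : ℕ => (m.choose r : ℝ) / m ^ r) atTop (nhds (1 / r.factorial)) := by
    have h1 : Tendsto (fun m : ℕ => (m.descFactorial r : ℝ) / m ^ r) atTop (nhds 1) := by
      induction r with
      | zero => simp
      | succ s ih =>
        have := (hlin s).mul ih
        rw [one_mul] at this
        refine this.congr fun m => ?_
        rw [Nat.descFactorial_succ, pow_succ', Nat.cast_mul, mul_div_mul_comm]
    refine (h1.div_const (r.factorial : ℝ)).congr fun m => ?_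
    rw [Nat.descFactorial_eq_factorial_mul_choose, Nat.cast_mul]
    have : (r.factorial : ℝ) ≠ 0 := by positivity
    field_simp
  have h2 := (hch.mul_const (y ^ r)).mul (((hs r).const_mul ((r : ℝ) + 1)).sub
    (((hlin r).mul_const y).mul (hs (r + 1))))
  rw [one_mul] at h2
  convert h2 using 1
  · ext m
    unfold psiF
    rw [div_pow, Nat.sub_sub]; ring
  · congr 1; ring

lemma limit_integral (r : ℕ) (α : ℝ) (hα : α ∈ Set.Ioo (0 : ℝ) 1) (D : ℝ) :
    ∫ y in Set.Ioi (0 : ℝ), (y ^ r / r.factorial * ((r + 1) * Real.exp (-y) - y * Real.exp (-y)))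
      * (D * y ^ (-α)) = D * (α * Real.Gamma (r + 1 - α) / (r.factorial : ℝ)) := by
  obtain ⟨h0, h1⟩ := hα
  have hs : 0 < (r : ℝ) + 1 - α := by
    have : (0 : ℝ) ≤ r := by positivity
    linarith
  have i1 := Real.GammaIntegral_convergent hs
  have i2 := Real.GammaIntegral_convergent (s := (r : ℝ) + 1 - α + 1) (by linarith)
  have e1 := Real.Gamma_eq_integral hs
  have e2 := Real.Gamma_eq_integral (s := (r : ℝ) + 1 - α + 1) (by linarith)
  have : ∀ y ∈ Set.Ioi (0 : ℝ), (y ^ r / r.factorial * ((r + 1) * Real.exp (-y) - y * Real.exp (-y)))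
      * (D * y ^ (-α)) = (D * (r + 1) / r.factorial) * (Real.exp (-y) * y ^ ((r : ℝ) + 1 - α - 1))
        - (D / r.factorial) * (Real.exp (-y) * y ^ ((r : ℝ) + 1 - α + 1 - 1)) := by
    intro y hy
    have hy : 0 < y := hy
    have a1 : y ^ ((r : ℝ) + 1 - α - 1) = y ^ r * y ^ (-α) := by
      rw [← Real.rpow_natCast, ← Real.rpow_add hy]; congr 1; ring
    have a2 : y ^ ((r : ℝ) + 1 - α + 1 - 1) = y ^ r * y * y ^ (-α) := by
      rw [← pow_succ, ← Real.rpow_natCast, ← Real.rpow_add hy]; congr 1; push_cast; ring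
    rw [a1, a2]; ring
  rw [setIntegral_congr_fun measurableSet_Ioi this, integral_sub (i1.const_mul _) (i2.const_mul _),
    integral_const_mul, integral_const_mul, ← e1, ← e2, Real.Gamma_add_one hs.ne']
  ring

lemma bound_integrable (r : ℕ) (β K : ℝ) (hβ : β < 1) :
    IntegrableOn (fun y : ℝ => y ^ r * ((r + 1) + y) * Real.exp (-(1/2) * y) * (K * (y ^ (-β) + 1)))
      (Set.Ioi 0) := by
  have h : ∀ s : ℝ, -1 < s → IntegrableOn (fun y : ℝ => y ^ s * Real.exp (-(1/2) * y)) (Set.Ioi 0) := by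
    intro s hs
    have := integrableOn_rpow_mul_exp_neg_mul_rpow (p := 1) (s := s) (b := 1/2) hs one_pos (by norm_num)
    simpa using this
  have hr : (0 : ℝ) ≤ r := by positivity
  have g1 := (h (r - β) (by linarith)).const_mul (K * (r + 1))
  have g2 := (h (r + 1 - β) (by linarith)).const_mul K
  have g3 := (h r (by linarith)).const_mul (K * (r + 1))
  have g4 := (h (r + 1) (by linarith)).const_mul K
  refine IntegrableOn.congr_fun (((g1.add g2).add g3).add g4) (fun y hy => ?_) measurableSet_Ioi
  have hy : 0 < y := hy
  simp only [Pi.add_apply]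
  rw [sub_eq_add_neg, sub_eq_add_neg, Real.rpow_add hy, Real.rpow_add hy, Real.rpow_add hy,
    Real.rpow_natCast, Real.rpow_one]
  ring

lemma abelian {A : Type*} (p : A → ℕ → ℝ) (a : A) (hpnn : ∀ k, 0 ≤ p a k)
    (hp : HasSum (p a) 1) {U : ℝ → ℝ} {α : ℝ} (hα : α ∈ Set.Ioo (0 : ℝ) 1) (h : RegU U α) (D : ℝ)
    (hV : Tendsto (fun x : ℝ => nuR p a (1 / x) / U x) atTop (nhds D)) (r : ℕ) :
    Tendsto (fun m : ℕ => gfun (p a) r m / (U m / m)) atTop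
      (nhds (D * (α * Real.Gamma (r + 1 - α) / (r.factorial : ℝ)))) := by
  obtain ⟨β, hβ1, hβ2⟩ := exists_between hα.2
  have hβ0 : 0 < β := hα.1.trans hβ1
  obtain ⟨K, x0, hK, hx0, hpot⟩ := h.potter hβ1 hβ0
  have hev : ∀ᶠ x in atTop, nuR p a (1 / x) ≤ (|D| + 1) * U x := by
    filter_upwards [hV.eventually (gt_mem_nhds (lt_of_le_of_lt (le_abs_self D) (lt_add_one _))), h.pos]
      with x h1 h2
    exact ((div_lt_iff₀ h2).1 h1).le
  obtain ⟨x1, hx1⟩ := eventually_atTop.1 hev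
  set K1 := |D| + 1 with hK1
  have hK1p : 0 < K1 := by positivity
  set K2 := K1 * K + K1 with hK2
  have hbV : ∀ x, max x0 (max x1 1) ≤ x → ∀ y, 0 < y → nuR p a (y / x) ≤ K2 * (y ^ (-β) + 1) * U x := by
    intro x hx y hy
    have hxx0 := (le_max_left _ _).trans hx
    have hxx1 := (le_max_left _ _).trans ((le_max_right _ _).trans hx)
    have hx11 := (le_max_right _ _).trans ((le_max_right _ _).trans hx)
    have hxp : 0 < x := by linarith
    have hyb : 0 < y ^ (-β) := Real.rpow_pos_of_pos hy _
    have hU := h.nn x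
    rcases le_total y 1 with h1 | h1
    · have hl : 1 ≤ 1 / y := (one_le_div hy).2 h1
      have h2 := hpot x hxx0 (1 / y) hl
      have h3 := hx1 (1 / y * x) (by nlinarith)
      have h4 : 1 / (1 / y * x) = y / x := by field_simp
      rw [h4] at h3
      have h5 : (1 / y) ^ β = y ^ (-β) := by
        rw [Real.rpow_neg hy.le, one_div, Real.inv_rpow hy.le]
      rw [h5] at h2
      calc nuR p a (y / x) ≤ K1 * (K * y ^ (-β) * U x) := h3.trans (by gcongr)
        _ = (K1 * K) * y ^ (-β) * U x := by ring
        _ ≤ K2 * (y ^ (-β) + 1) * U x := by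
          gcongr <;> linarith
    · have h2 := nuR_anti p a hp (by positivity : 0 < 1 / x) (div_le_div_of_nonneg_right h1 hxp.le)
      calc nuR p a (y / x) ≤ 1 * K1 * U x := by rw [one_mul]; exact h2.trans (hx1 x hxx1)
        _ ≤ K2 * (y ^ (-β) + 1) * U x := by
          have : 0 < K1 * K := by positivity
          rw [mul_comm K2]
          gcongr <;> linarith
  have hcast : Tendsto (fun m : ℕ => (m : ℝ)) atTop atTop := tendsto_natCast_atTop_atTop
  have hmain := tendsto_integral_filter_of_dominated_convergence (μ := volume.restrict (Set.Ioi (0 : ℝ)))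
    (l := (atTop : Filter ℕ)) (F := fun (m : ℕ) y => psiF r m y * (nuR p a (y / m) / U m))
    (f := fun y => (y ^ r / r.factorial * ((r + 1) * Real.exp (-y) - y * Real.exp (-y)))
      * (D * y ^ (-α)))
    (fun y : ℝ => y ^ r * ((r + 1) + y) * Real.exp (-(1/2) * y) * (K2 * (y ^ (-β) + 1)))
    ?_ ?_ (bound_integrable r β K2 hβ2) ?_
  · rw [limit_integral r α hα D] at hmain
    refine hmain.congr' ?_
    filter_upwards [eventually_gt_atTop 0] with m hm
    have hm' : (m : ℝ) ≠ 0 := by positivity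
    have := gfun_integral p a hpnn hp r m hm
    simp only [← mul_div_assoc]
    rw [integral_div, ← this]
    rw [div_div_eq_mul_div, mul_comm]
  · filter_upwards [eventually_gt_atTop 0] with m hm
    have hm' : (0 : ℝ) < m := by positivity
    refine (psiF_cont r m).aestronglyMeasurable.mul ?_
    refine AEMeasurable.aestronglyMeasurable ?_
    refine AEMeasurable.div_const ?_ _
    refine aemeasurable_restrict_of_antitoneOn measurableSet_Ioi fun x hx y _ hxy => ?_
    exact nuR_anti p a hp (div_pos hx hm') (div_le_div_of_nonneg_right hxy hm'.le)
  · filter_upwards [eventually_ge_atTop (2 * r + 2), hcast.eventually_ge_atTop (max x0 (max x1 1)),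
      hcast.eventually h.pos] with m hm hmx hU
    refine (ae_restrict_mem measurableSet_Ioi).mono fun y hy => ?_
    have hy : 0 < y := hy
    have hyb : 0 < y ^ (-β) := Real.rpow_pos_of_pos hy _
    have hm' : (0 : ℝ) < m := by exact_mod_cast (by omega : 0 < m)
    rw [Real.norm_eq_abs, abs_mul]
    rcases le_or_gt y m with hym | hym
    · refine mul_le_mul (psiF_bound r m hm y hy.le hym) ?_ (abs_nonneg _) (by positivity)
      rw [abs_of_nonneg (div_nonneg (nuR_nonneg _ _ _) hU.le), div_le_iff₀ hU]
      exact hbV m hmx y hy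
    · rw [nuR_zero p a hpnn hp ((one_lt_div hm').2 hym)]
      simp only [zero_div, abs_zero, mul_zero]
      positivity
  · refine (ae_restrict_mem measurableSet_Ioi).mono fun y hy => ?_
    have hy : 0 < y := hy
    refine (psiF_tendsto r y).mul ?_
    have hy1 : 0 < 1 / y := by positivity
    have t1 : Tendsto (fun m : ℕ => 1 / y * (m : ℝ)) atTop atTop := hcast.const_mul_atTop hy1
    have t2 := (hV.comp t1).mul ((h.rv (1 / y) hy1).comp hcast)
    have h5 : (1 / y) ^ α = y ^ (-α) := by
      rw [Real.rpow_neg hy.le, one_div, Real.inv_rpow hy.le]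
    rw [h5] at t2
    refine t2.congr' ?_
    filter_upwards [t1.eventually h.pos, eventually_gt_atTop 0] with m hU hm
    have hm' : (m : ℝ) ≠ 0 := by positivity
    have h4 : 1 / (1 / y * (m : ℝ)) = y / m := by field_simp
    simp only [Function.comp_apply, h4]
    rw [div_mul_div_cancel₀ hU.ne']

lemma nuR_rv_atTop {A : Type*} (p : A → ℕ → ℝ) (a : A) (α : ℝ) (ℓ : ℝ → ℝ) (C : ℝ)
    (hRV : Tendsto (fun ε : ℝ => nuR p a ε / (ε ^ (-α) * ℓ (1 / ε)))
      (nhdsWithin 0 (Set.Ioi 0)) (nhds C)) :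
    Tendsto (fun x : ℝ => nuR p a (1 / x) / (x ^ α * ℓ x)) atTop (nhds C) := by
  refine (hRV.comp tendsto_inv_atTop_nhdsGT_zero).congr' ?_
  filter_upwards [eventually_gt_atTop 0] with x hx
  simp only [Function.comp_apply, one_div, inv_inv]
  rw [Real.rpow_neg (by positivity), Real.inv_rpow hx.le, inv_inv]

lemma regU_nuR {A : Type*} (p : A → ℕ → ℝ) (a : A) (hpnn : ∀ k, 0 ≤ p a k) (hp : HasSum (p a) 1)
    (α : ℝ) (ℓ : ℝ → ℝ) (C : ℝ) (hC : 0 < C) (hsv : SlowlyVarying ℓ)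
    (hl : ∀ x, 1 ≤ x → 0 < ℓ x)
    (h : Tendsto (fun x : ℝ => nuR p a (1 / x) / (x ^ α * ℓ x)) atTop (nhds C)) :
    RegU (fun x => nuR p a (1 / x)) α where
  mono x y hx hxy := nuR_anti p a hp (one_div_pos.2 (hx.trans_le hxy))
    (one_div_le_one_div_of_le hx hxy)
  nn x := nuR_nonneg p a _
  le x hx := by
    have := nuR_mul_le p a hpnn hp (one_div_pos.2 hx)
    rw [one_div_mul_eq_div, div_le_one hx] at this
    exact this
  pos := by
    filter_upwards [h.eventually (lt_mem_nhds hC), eventually_ge_atTop 1] with x h1 h2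
    have h3 : 0 < x ^ α * ℓ x := mul_pos (Real.rpow_pos_of_pos (by linarith) _) (hl x h2)
    exact (div_pos_iff_of_pos_right h3).1 h1
  rv c hc := by
    have t1 : Tendsto (fun x : ℝ => c * x) atTop atTop := tendsto_id.const_mul_atTop hc
    have t2 := (((h.comp t1).div h hC.ne').mul_const (c ^ α)).mul (hsv c hc)
    rw [div_self hC.ne', one_mul, mul_one] at t2
    refine t2.congr' ?_
    filter_upwards [t1.eventually_ge_atTop 1, eventually_ge_atTop 1] with x h1 h2
    have h3 := (hl x h2).ne'
    have h4 := (hl _ h1).ne'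
    have hx : 0 < x := by linarith
    have h5 := (Real.rpow_pos_of_pos hx α).ne'
    have h6 := (Real.rpow_pos_of_pos hc α).ne'
    simp only [Function.comp_apply, Pi.div_apply]
    rw [Real.mul_rpow hc.le hx.le]
    by_cases h7 : nuR p a (1 / x) = 0
    · rw [h7]; simp
    · generalize nuR p a (1 / (c * x)) = w at *
      generalize nuR p a (1 / x) = v at *
      field_simp

theorem regime_main {A : Type*} [Fintype A] [Nonempty A]
    [DecidableEq A]
    {Ω : Type*} [MeasurableSpace Ω] (P : Measure Ω) [IsProbabilityMeasure P]
    (Z : ℕ → Ω → A × ℕ)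
    (Q : A → A → ℝ) (π η : A → ℝ)
    (hQnn : ∀ x y, 0 ≤ Q x y) (hQ : ∀ x, ∑ y, Q x y = 1)
    (hprim : ∃ t : ℕ, ∀ a b, 0 < mpow Q t a b)
    (hπpos : ∀ x, 0 < π x) (hπsum : ∑ x, π x = 1)
    (hstat : ∀ x, ∑ y, π y * Q y x = π x)
    (hηnn : ∀ a, 0 ≤ η a) (hηsum : ∑ a, η a = 1)
    (p : A → ℕ → ℝ) (hpnn : ∀ a k, 0 ≤ p a k) (hp : ∀ a, HasSum (p a) 1)
    (hZ : ∀ (n : ℕ) (a : ℕ → A) (k : ℕ → ℕ),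
      P (⋂ i ∈ Finset.range (n + 1), {ω | Z i ω = (a i, k i)}) =
        ENNReal.ofReal ((η (a 0) * ∏ i ∈ Finset.range n, Q (a i) (a (i + 1))) *
          ∏ i ∈ Finset.range (n + 1), p (a i) (k i)))
    (α : ℝ) (hα : α ∈ Set.Ioo (0 : ℝ) 1)
    (ℓ : ℝ → ℝ) (hsv : SlowlyVarying ℓ)
    (hbdd : ∀ b : ℝ, 1 ≤ b → ∃ m M : ℝ, 0 < m ∧
      ∀ x ∈ Set.Icc (1 : ℝ) b, m ≤ ℓ x ∧ ℓ x ≤ M)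
    (C : A → ℝ) (hCnn : ∀ a, 0 ≤ C a) (hCne : ∃ a, C a ≠ 0)
    (hRV : ∀ a : A, Tendsto (fun ε : ℝ => nuR p a ε / (ε ^ (-α) * ℓ (1 / ε)))
      (nhdsWithin 0 (Set.Ioi 0)) (nhds (C a)))
    (r : ℕ) :
    Tendsto (fun n : ℕ =>
        (P {ω | (∑ i ∈ Finset.range n, if Z i ω = Z n ω then 1 else 0 : ℕ) = r}).toReal /
          (∫ ω,
            (if r < (∑ i ∈ Finset.range n, if (Z i ω).1 = (Z n ω).1 then 1 else 0 : ℕ) then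
              ((∑ i ∈ Finset.range n, if (Z i ω).1 = (Z n ω).1 then 1 else 0 : ℕ) : ℝ)
                  ^ (-(1 - α)) *
                ℓ ((∑ i ∈ Finset.range n, if (Z i ω).1 = (Z n ω).1 then 1 else 0 : ℕ) : ℝ)
            else 0) ∂P))
      atTop (nhds ((∑ a, π a ^ α * (C a *
          (α * Real.Gamma (r + 1 - α) / (r.factorial : ℝ)))) /
        (∑ a, π a ^ α))) := by
  have hl : ∀ x, 1 ≤ x → 0 < ℓ x := fun x hx => by
    obtain ⟨m, M, hm, h⟩ := hbdd x hx
    exact hm.trans_le (h x ⟨hx, le_rfl⟩).1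
  have hT := fun a => nuR_rv_atTop p a α ℓ (C a) (hRV a)
  obtain ⟨a0, ha0⟩ := hCne
  have hC0 : 0 < C a0 := lt_of_le_of_ne (hCnn a0) (Ne.symm ha0)
  set U : ℝ → ℝ := fun x => nuR p a0 (1 / x) with hU
  have hR : RegU U α := regU_nuR p a0 (hpnn a0) (hp a0) α ℓ (C a0) hC0 hsv hl (hT a0)
  have hT0 : Tendsto (fun x : ℝ => U x / (x ^ α * ℓ x)) atTop (nhds (C a0)) := hT a0
  have hV : ∀ a, Tendsto (fun x : ℝ => nuR p a (1 / x) / U x) atTop (nhds (C a / C a0)) := by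
    intro a
    refine ((hT a).div hT0 hC0.ne').congr' ?_
    filter_upwards [eventually_ge_atTop 1] with x h2
    have h3 : 0 < x ^ α * ℓ x := mul_pos (Real.rpow_pos_of_pos (by linarith) _) (hl x h2)
    simp only [Pi.div_apply]
    rw [div_div_div_cancel_right₀ h3.ne']
  have hcast : Tendsto (fun m : ℕ => (m : ℝ)) atTop atTop := tendsto_natCast_atTop_atTop
  set G : ℕ → ℝ := fun m => if r < m then (m : ℝ) ^ (-(1 - α)) * ℓ m else 0 with hG
  have hGnn : ∀ m, 0 ≤ G m := by
    intro m
    simp only [hG]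
    split_ifs with h
    · have : (1 : ℝ) ≤ m := by exact_mod_cast (by omega : 1 ≤ m)
      exact mul_nonneg (by positivity) (hl _ this).le
    · exact le_rfl
  have hGlim : Tendsto (fun m : ℕ => G m / (U m / m)) atTop (nhds (1 / C a0)) := by
    rw [one_div]
    refine ((hT0.comp hcast).inv₀ hC0.ne').congr' ?_
    filter_upwards [eventually_gt_atTop r] with m hm
    have h1 : (0 : ℝ) < m := by exact_mod_cast (by omega : 0 < m)
    simp only [Function.comp_apply, hG, if_pos hm]
    rw [inv_div, neg_sub, Real.rpow_sub h1, Real.rpow_one]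
    field_simp
  have hden : ∀ n : ℕ, (∫ ω,
            (if r < (∑ i ∈ Finset.range n, if (Z i ω).1 = (Z n ω).1 then 1 else 0 : ℕ) then
              ((∑ i ∈ Finset.range n, if (Z i ω).1 = (Z n ω).1 then 1 else 0 : ℕ) : ℝ)
                  ^ (-(1 - α)) *
                ℓ ((∑ i ∈ Finset.range n, if (Z i ω).1 = (Z n ω).1 then 1 else 0 : ℕ) : ℝ)
            else 0) ∂P) = ∑ a, EX Q η a n (fun m x => (if x = a then 1 else 0) * G m) := by
    intro n
    exact denominator_eq P Z hQnn hQ hηnn hηsum hpnn hp hZ n G hGnn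
  have hnum := fun n => numerator_eq P Z hQnn hQ hηnn hηsum hpnn hp hZ n r
  have L1 : Tendsto (fun n : ℕ => (∑ a, EX Q η a n (fun m x => (if x = a then 1 else 0) * gfun (p a) r m))
      / (U n / n)) atTop (nhds (∑ a, (C a / C a0 * (α * Real.Gamma (r + 1 - α) / (r.factorial : ℝ)))
        * π a ^ α)) := by
    simp only [Finset.sum_div]
    refine tendsto_finsetSum _ fun a _ => ?_
    exact EX_limit hQnn hQ hprim hπpos hπsum hstat hηnn hηsum hR hα.1 _ _
      (abelian p a (hpnn a) (hp a) hα hR _ (hV a) r) a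
  have L2 : Tendsto (fun n : ℕ => (∑ a, EX Q η a n (fun m x => (if x = a then 1 else 0) * G m))
      / (U n / n)) atTop (nhds (∑ a, (1 / C a0) * π a ^ α)) := by
    simp only [Finset.sum_div]
    refine tendsto_finsetSum _ fun a _ => ?_
    exact EX_limit hQnn hQ hprim hπpos hπsum hstat hηnn hηsum hR hα.1 _ _ hGlim a
  have hS : 0 < ∑ a, π a ^ α :=
    Finset.sum_pos (fun a _ => Real.rpow_pos_of_pos (hπpos a) _) Finset.univ_nonempty
  have L3 := L1.div L2 (by rw [← Finset.mul_sum]; positivity)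
  simp only [hden, hnum]
  have hval : (∑ a, π a ^ α * (C a * (α * Real.Gamma (r + 1 - α) / (r.factorial : ℝ)))) /
        (∑ a, π a ^ α) = (∑ a, (C a / C a0 * (α * Real.Gamma (r + 1 - α) / (r.factorial : ℝ)))
        * π a ^ α) / (∑ a, (1 / C a0) * π a ^ α) := by
    have e : ∀ a, (C a / C a0 * (α * Real.Gamma (r + 1 - α) / (r.factorial : ℝ))) * π a ^ α
      = (1 / C a0) * (π a ^ α * (C a * (α * Real.Gamma (r + 1 - α) / (r.factorial : ℝ)))) := by
      intro a; ring
    simp only [e]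
    rw [← Finset.mul_sum, ← Finset.mul_sum, mul_div_mul_left _ _ (by positivity)]
  rw [hval]
  refine L3.congr' ?_
  filter_upwards [hcast.eventually hR.pos, eventually_gt_atTop 0] with n h1 h2
  have h3 : (0 : ℝ) < n := by positivity
  simp only [Pi.div_apply]
  rw [div_div_div_cancel_right₀ (div_pos h1 h3).ne']

/-- Theorem 5.1, second limit, case α ∈ (0,1): under the hypotheses of the
regime switching asymptotic theorem,
`P_η{𝓛_n = r}/E_η[1{L_n>r} L_n^{−(1−α)}ℓ(L_n)] → (Σ_a π_a^α C(a) αΓ(r+1−α)/r!)/(Σ_a π_a^α)`.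
(Indexed from 0: `𝓛_n = Σ_{i<n} 1{Z_i = Z_n}`, `L_n = Σ_{i<n} 1{X_i = X_n}`.) -/
theorem regime_switching_asymptotics_ratio {A : Type*} [Fintype A] [Nonempty A]
    [DecidableEq A]
    {Ω : Type*} [MeasurableSpace Ω] (P : Measure Ω) [IsProbabilityMeasure P]
    (Z : ℕ → Ω → A × ℕ)
    (Q : A → A → ℝ) (π η : A → ℝ)
    (hQnn : ∀ x y, 0 ≤ Q x y) (hQ : ∀ x, ∑ y, Q x y = 1)
    (hprim : ∃ t : ℕ, ∀ a b, 0 < mpow Q t a b)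
    (hπpos : ∀ x, 0 < π x) (hπsum : ∑ x, π x = 1)
    (hstat : ∀ x, ∑ y, π y * Q y x = π x)
    (hηnn : ∀ a, 0 ≤ η a) (hηsum : ∑ a, η a = 1)
    (p : A → ℕ → ℝ) (hpnn : ∀ a k, 0 ≤ p a k) (hp : ∀ a, HasSum (p a) 1)
    (hZ : ∀ (n : ℕ) (a : ℕ → A) (k : ℕ → ℕ),
      P (⋂ i ∈ Finset.range (n + 1), {ω | Z i ω = (a i, k i)}) =
        ENNReal.ofReal ((η (a 0) * ∏ i ∈ Finset.range n, Q (a i) (a (i + 1))) *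
          ∏ i ∈ Finset.range (n + 1), p (a i) (k i)))
    (α : ℝ) (hα : α ∈ Set.Ioo (0 : ℝ) 1)
    (ℓ : ℝ → ℝ) (hsv : SlowlyVarying ℓ)
    (hbdd : ∀ b : ℝ, 1 ≤ b → ∃ m M : ℝ, 0 < m ∧
      ∀ x ∈ Set.Icc (1 : ℝ) b, m ≤ ℓ x ∧ ℓ x ≤ M)
    (C : A → ℝ) (hCnn : ∀ a, 0 ≤ C a) (hCne : ∃ a, C a ≠ 0)
    (hRV : ∀ a : A, Tendsto (fun ε : ℝ => nuR p a ε / (ε ^ (-α) * ℓ (1 / ε)))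
      (nhdsWithin 0 (Set.Ioi 0)) (nhds (C a)))
    (r : ℕ) :
    Tendsto (fun n : ℕ =>
        (P {ω | (∑ i ∈ Finset.range n, if Z i ω = Z n ω then 1 else 0 : ℕ) = r}).toReal /
          (∫ ω,
            (if r < (∑ i ∈ Finset.range n, if (Z i ω).1 = (Z n ω).1 then 1 else 0 : ℕ) then
              ((∑ i ∈ Finset.range n, if (Z i ω).1 = (Z n ω).1 then 1 else 0 : ℕ) : ℝ)
                  ^ (-(1 - α)) *
                ℓ ((∑ i ∈ Finset.range n, if (Z i ω).1 = (Z n ω).1 then 1 else 0 : ℕ) : ℝ)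
            else 0) ∂P))
      atTop (nhds ((∑ a, π a ^ α * (C a *
          (α * Real.Gamma (r + 1 - α) / (r.factorial : ℝ)))) /
        (∑ a, π a ^ α))) := by
  exact regime_main P Z Q π η hQnn hQ hprim hπpos hπsum hstat hηnn hηsum p hpnn hp hZ α hα ℓ hsv hbdd
    C hCnn hCne hRV r
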